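/- arXiv:1902.03887 — 3 statements merged into one kernel-verified Lean document; each statement's English description precedes it below -/
import Mathlib

section
/- For the uniform probability distribution P on the boundary L of the regular hexagon with vertices (0,0), (1,0), (3/2,√3/2), (1,√3), (0,√3), (−1/2,√3/2), the set {(13/12, √3/2), (−1/12, √3/2)} forms an optimal set of two-means, and the quantization error for two-means is V₂(P) = 71/144. -/
open MeasureTheory Real Filter
open scoped ENNReal

noncomputable section

/-- The plane `ℝ²` with the Euclidean norm. -/
abbrev E2 : Type := EuclideanSpace ℝ (Fin 2)

/-- The point `(a, b)` of `ℝ²`. -/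
def pt (a b : ℝ) : E2 := !₂[a, b]

/-- The `n`th quantization error of a Borel probability measure `P` on `ℝ²`:
the infimum of `∫ min_{a ∈ α} ‖x - a‖² dP(x)` over all (nonempty) finite sets
`α ⊆ ℝ²` with at most `n` elements. -/
def quantErr (P : Measure E2) (n : ℕ) : ℝ :=
  sInf {v : ℝ | ∃ α : Set E2, α.Finite ∧ α.Nonempty ∧ α.ncard ≤ n ∧
    v = ∫ x, sInf ((fun a => ‖x - a‖ ^ 2) '' α) ∂P}

/-- `α` is an optimal set of `n`-means for `P` if it attains the `n`th
quantization error. -/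
def IsOptimalSet (P : Measure E2) (n : ℕ) (α : Set E2) : Prop :=
  α.Finite ∧ α.Nonempty ∧ α.ncard ≤ n ∧
    (∫ x, sInf ((fun a => ‖x - a‖ ^ 2) '' α) ∂P) = quantErr P n

/-- The boundary `L` of the regular hexagon with vertices `O(0,0)`, `A₁(1,0)`,
`A₂(3/2,√3/2)`, `A₃(1,√3)`, `A₄(0,√3)`, `A₅(-1/2,√3/2)`. -/
def hexL : Set E2 :=
  segment ℝ (pt 0 0) (pt 1 0) ∪ segment ℝ (pt 1 0) (pt (3/2) (Real.sqrt 3/2)) ∪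
  segment ℝ (pt (3/2) (Real.sqrt 3/2)) (pt 1 (Real.sqrt 3)) ∪
  segment ℝ (pt 1 (Real.sqrt 3)) (pt 0 (Real.sqrt 3)) ∪
  segment ℝ (pt 0 (Real.sqrt 3)) (pt (-(1/2)) (Real.sqrt 3/2)) ∪
  segment ℝ (pt (-(1/2)) (Real.sqrt 3/2)) (pt 0 0)

/-- The uniform probability distribution on `hexL`: density `1/6` with respect
to the one-dimensional Hausdorff (arc-length) measure on `hexL`. -/
def hexP : Measure E2 := (6 : ℝ≥0∞)⁻¹ • (μH[1] : Measure E2).restrict hexL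

/-- side average -/
def Iav (t A B : ℝ) : ℝ := ∫ s in (0:ℝ)..1, max |A + s * (B - A)| t

lemma cont_max (t : ℝ) : Continuous fun x : ℝ => max |x| t := by fun_prop

lemma Iav_symm (t A B : ℝ) : Iav t A B = Iav t B A := by
  unfold Iav
  have := intervalIntegral.integral_comp_sub_left (a := 0) (b := 1) (fun s : ℝ => max |B + s * (A - B)| t) 1
  simp only [sub_self, sub_zero] at this
  rw [← this]
  congr 1; ext s; congr 2; ring

lemma Iav_neg (t A B : ℝ) : Iav t (-A) (-B) = Iav t A B := by
  unfold Iav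
  congr 1; ext s; congr 1; rw [← abs_neg]; congr 1; ring

lemma Iav_mul (t A B : ℝ) : (B - A) * Iav t A B = ∫ x in A..B, max |x| t := by
  unfold Iav
  have := intervalIntegral.mul_integral_comp_add_mul (a := 0) (b := 1) (f := fun x : ℝ => max |x| t) (B - A) A
  simp only [mul_zero, add_zero, mul_one, add_sub_cancel] at this
  rw [← this]
  congr 2; ext s; rw [mul_comm s]

lemma Iav_trap (t A B : ℝ) : Iav t A B ≤ (max |A| t + max |B| t) / 2 := by
  unfold Iav
  have h : ∫ s in (0:ℝ)..1, max |A + s * (B - A)| t ≤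
      ∫ s in (0:ℝ)..1, (max |A| t + s * (max |B| t - max |A| t)) := by
    apply intervalIntegral.integral_mono_on (by norm_num)
    · exact Continuous.intervalIntegrable (by fun_prop) _ _
    · exact Continuous.intervalIntegrable (by fun_prop) _ _
    intro s hs
    have hA := le_max_left |A| t
    have hA' := le_max_right |A| t
    have hB := le_max_left |B| t
    have hB' := le_max_right |B| t
    have h1 : 0 ≤ 1 - s := by linarith [hs.2]
    have h0 := hs.1
    apply max_le
    · have : A + s * (B - A) = (1 - s) * A + s * B := by ring
      rw [this]
      refine (abs_add_le _ _).trans ?_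
      rw [abs_mul, abs_mul, abs_of_nonneg h0, abs_of_nonneg h1]
      nlinarith
    · nlinarith
  refine h.trans (le_of_eq ?_)
  rw [intervalIntegral.integral_add (by simp) (Continuous.intervalIntegrable (by fun_prop) _ _),
    intervalIntegral.integral_mul_const, integral_id]
  simp
  ring

lemma F_small (t x : ℝ) (hx : 0 ≤ x) (hxt : x ≤ t) : ∫ y in (0:ℝ)..x, max |y| t = t * x := by
  rw [intervalIntegral.integral_congr (g := fun _ => t)]
  · simp [mul_comm]
  · intro y hy
    rw [Set.uIcc_of_le hx] at hy
    simp only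
    rw [abs_of_nonneg hy.1, max_eq_right (hy.2.trans hxt)]

lemma F_large (t x : ℝ) (ht : 0 ≤ t) (hxt : t ≤ x) :
    ∫ y in (0:ℝ)..x, max |y| t = (x ^ 2 + t ^ 2) / 2 := by
  rw [← intervalIntegral.integral_add_adjacent_intervals (b := t)
    ((cont_max t).intervalIntegrable _ _) ((cont_max t).intervalIntegrable _ _),
    F_small t t ht le_rfl, intervalIntegral.integral_congr (a := t) (g := fun y => y)]
  · rw [integral_id]; ring
  · intro y hy
    rw [Set.uIcc_of_le hxt] at hy
    simp only
    rw [abs_of_nonneg (ht.trans hy.1), max_eq_left hy.1]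

lemma F_split (t A B : ℝ) : ∫ y in A..B, max |y| t =
    (∫ y in (0:ℝ)..B, max |y| t) - ∫ y in (0:ℝ)..A, max |y| t := by
  rw [intervalIntegral.integral_interval_sub_left
    ((cont_max t).intervalIntegrable _ _) ((cont_max t).intervalIntegrable _ _)]

lemma F_neg (t A : ℝ) : ∫ y in (0:ℝ)..(-A), max |y| t = - ∫ y in (0:ℝ)..A, max |y| t := by
  rw [intervalIntegral.integral_symm, ← neg_zero, ← intervalIntegral.integral_comp_neg]
  simp

lemma core (t u v : ℝ) (ht : 0 ≤ t) (hv : 0 ≤ v) (huv : v ≤ u) (h : u ^ 2 + u * v + v ^ 2 = 3 / 4) :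
    ∃ G, G ^ 2 ≤ t ^ 2 + 49 / 144 ∧ Iav t u (-v) + Iav t v (u + v) + Iav t (u + v) u ≤ 3 * G := by
  have hu : 0 < u := by nlinarith
  have hc1 : u + v ≤ 1 := by nlinarith
  have hc2 : 13 / 15 - 1/500 ≤ u + v := by nlinarith
  have hc : 0 < u + v := by linarith
  have h3 := Iav_trap t (u + v) u
  have h2 := Iav_trap t v (u + v)
  rw [abs_of_nonneg hc.le, abs_of_nonneg hu.le] at h3
  rw [abs_of_nonneg hc.le, abs_of_nonneg hv] at h2
  have h1 := Iav_trap t u (-v)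
  rw [abs_neg, abs_of_nonneg hu.le, abs_of_nonneg hv] at h1
  have e1 : (u + v) * Iav t u (-v) = (∫ y in (0:ℝ)..u, max |y| t) + ∫ y in (0:ℝ)..v, max |y| t := by
    have := Iav_mul t u (-v)
    rw [F_split, F_neg] at this
    linarith
  have e2 : u * Iav t v (u + v) = (∫ y in (0:ℝ)..(u+v), max |y| t) - ∫ y in (0:ℝ)..v, max |y| t := by
    have := Iav_mul t v (u + v)
    rw [F_split] at this
    linarith
  rcases le_total (u + v) t with hct | hct
  · refine ⟨t, by linarith, ?_⟩
    rw [max_eq_right hct] at h2 h3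
    rw [max_eq_right (by linarith)] at h1 h2 h3
    rw [max_eq_right (by linarith)] at h1
    linarith
  refine ⟨7 / 12 + 4 / 7 * t ^ 2, ?_, ?_⟩
  · have : t ^ 2 ≤ 1 := by nlinarith
    nlinarith [sq_nonneg t]
  rw [max_eq_left hct] at h2 h3
  rw [F_large t (u + v) ht hct] at e2
  rcases le_total u t with hut | hut
  · rw [max_eq_right hut] at h1 h3
    rw [max_eq_right (by linarith)] at h1 h2
    nlinarith [sq_nonneg (t - 7/12)]
  rw [max_eq_left hut] at h3
  rw [F_large t u ht hut] at e1
  have hb : (u ^ 2 + v ^ 2) / (2 * (u + v)) + 3 * (u + v) / 2 ≤ 7 / 4 := by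
    have : (u ^ 2 + v ^ 2) / (2 * (u + v)) ≤ 7 / 4 - 3 * (u + v) / 2 := by
      rw [div_le_iff₀ (by linarith)]
      nlinarith
    linarith
  rcases le_total v t with hvt | hvt
  · rw [F_small t v hv hvt] at e1 e2
    have k1 : Iav t u (-v) = ((u ^ 2 + t ^ 2) / 2 + t * v) / (u + v) := by
      rw [eq_div_iff hc.ne']; linarith
    have k2 : Iav t v (u + v) = (((u + v) ^ 2 + t ^ 2) / 2 - t * v) / u := by
      rw [eq_div_iff hu.ne']; linarith
    have k3 : Iav t u (-v) + Iav t v (u + v) + (u + v + u) / 2 =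
      ((u ^ 2 + v ^ 2) / (2 * (u + v)) + 3 * (u + v) / 2) + (t ^ 2 + ((t - v) * v) * (t - v) / (2 * u)) / (u + v) := by
      rw [k1, k2]; field_simp; ring
    have k4 : ((t - v) * v) * (t - v) / (2 * u) ≤ t ^ 2 / 8 := by
      rw [div_le_iff₀ (by linarith)]
      have a1 : (t - v) * v ≤ t ^ 2 / 4 := by nlinarith [sq_nonneg (t - 2 * v)]
      have : ((t - v) * v) * (t - v) ≤ t ^ 2 / 4 * u :=
        mul_le_mul a1 (by linarith) (by linarith) (by positivity)
      linarith
    have k5 : (t ^ 2 + ((t - v) * v) * (t - v) / (2 * u)) / (u + v) ≤ 12 / 7 * t ^ 2 := by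
      rw [div_le_iff₀ hc]
      nlinarith [sq_nonneg t]
    linarith
  · rw [F_large t v ht hvt] at e1 e2
    have k1 : Iav t u (-v) = (u ^ 2 + v ^ 2) / (2 * (u + v)) + t ^ 2 / (u + v) := by
      field_simp; linarith
    have k2 : Iav t v (u + v) = (u + 2 * v) / 2 := by
      field_simp; nlinarith
    have k5 : t ^ 2 / (u + v) ≤ 12 / 7 * t ^ 2 := by
      rw [div_le_iff₀ hc]
      nlinarith [sq_nonneg t]
    linarith

/-- The symmetric sum. -/
def Phi (t u v w : ℝ) : ℝ := Iav t u (-v) + Iav t v (-w) + Iav t w (-u)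

lemma Iav_sw (t A B : ℝ) : Iav t A (-B) = Iav t B (-A) := by
  rw [Iav_symm, ← Iav_neg, neg_neg]

lemma Phi_rot (t u v w : ℝ) : Phi t u v w = Phi t v w u := by unfold Phi; ring
lemma Phi_sw (t u v w : ℝ) : Phi t u v w = Phi t v u w := by
  unfold Phi; rw [Iav_sw t u v, Iav_sw t v w, Iav_sw t w u]; ring
lemma Phi_neg (t u v w : ℝ) : Phi t u v w = Phi t (-u) (-v) (-w) := by
  unfold Phi; simp only [Iav_neg]

lemma Phi1 (t u v w : ℝ) (ht : 0 ≤ t) (hv : 0 ≤ v) (huv : v ≤ u) (hs : u + v + w = 0)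
    (h : u ^ 2 + v ^ 2 + w ^ 2 = 3 / 2) :
    ∃ G, G ^ 2 ≤ t ^ 2 + 49 / 144 ∧ Phi t u v w ≤ 3 * G := by
  obtain rfl : w = -(u + v) := by linarith
  obtain ⟨G, h1, h2⟩ := core t u v ht hv huv (by nlinarith)
  refine ⟨G, h1, ?_⟩
  unfold Phi
  rwa [Iav_neg, neg_neg]

lemma Phi2 (t u v w : ℝ) (ht : 0 ≤ t) (hv : 0 ≤ v) (hu : 0 ≤ u) (hs : u + v + w = 0)
    (h : u ^ 2 + v ^ 2 + w ^ 2 = 3 / 2) :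
    ∃ G, G ^ 2 ≤ t ^ 2 + 49 / 144 ∧ Phi t u v w ≤ 3 * G := by
  rcases le_total v u with k | k
  · exact Phi1 t u v w ht hv k hs h
  · rw [Phi_sw]; exact Phi1 t v u w ht hu k (by linarith) (by linarith)

lemma Phi3 (t u v w : ℝ) (ht : 0 ≤ t) (hv : 0 ≤ v) (hs : u + v + w = 0)
    (h : u ^ 2 + v ^ 2 + w ^ 2 = 3 / 2) :
    ∃ G, G ^ 2 ≤ t ^ 2 + 49 / 144 ∧ Phi t u v w ≤ 3 * G := by
  rcases le_total 0 u with hu | hu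
  · exact Phi2 t u v w ht hv hu hs h
  rcases le_total 0 w with hw | hw
  · rw [Phi_rot]; exact Phi2 t v w u ht hw hv (by linarith) (by linarith)
  · rw [Phi_neg, ← Phi_rot]
    exact Phi2 t _ _ _ ht (by linarith) (by linarith) (by linarith) (by nlinarith)

lemma Phi_le (t u v w : ℝ) (ht : 0 ≤ t) (hs : u + v + w = 0)
    (h : u ^ 2 + v ^ 2 + w ^ 2 = 3 / 2) :
    ∃ G, G ^ 2 ≤ t ^ 2 + 49 / 144 ∧ Phi t u v w ≤ 3 * G := by
  rcases le_total 0 v with hv | hv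
  · exact Phi3 t u v w ht hv hs h
  · rw [Phi_neg]; exact Phi3 t _ _ _ ht (by linarith) (by linarith) (by nlinarith)

lemma Phi_val : Phi 0 1 (-(1/2)) (-(1/2)) = 7 / 4 := by
  have a1 : Iav 0 1 (1/2) = 3/4 := by
    have := Iav_mul 0 1 (1/2)
    rw [F_split, F_large 0 _ le_rfl (by norm_num), F_large 0 _ le_rfl (by norm_num)] at this
    linarith
  have a2 : Iav 0 (1/2) (-(1/2)) = 1/4 := by
    have := Iav_mul 0 (1/2) (-(1/2))
    rw [F_split, F_neg, F_large 0 _ le_rfl (by norm_num)] at this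
    linarith
  unfold Phi
  rw [neg_neg, a1, Iav_neg, Iav_symm 0 (1/2) 1, a1, Iav_symm 0 _ (1/2), a2]
  norm_num

lemma seg_int (A B : E2) (h : dist A B = 1) (f : E2 → ℝ) :
    ∫ x in segment ℝ A B, f x ∂(μH[1] : Measure E2) = ∫ s in (0:ℝ)..1, f (A + s • (B - A)) := by
  have hiso : Isometry (fun s : ℝ => A + s • (B - A)) := by
    apply Isometry.of_dist_eq
    intro x y
    rw [dist_add_left, dist_eq_norm, ← sub_smul, norm_smul, ← dist_eq_norm B A, dist_comm B A, h,
      mul_one, ← dist_eq_norm]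
  have hseg : segment ℝ A B = (fun s : ℝ => A + s • (B - A)) '' Set.Icc 0 1 := by
    rw [segment_eq_image']
  have hme := hiso.isClosedEmbedding.measurableEmbedding
  have hmap := hiso.map_hausdorffMeasure (d := 1) (Or.inl zero_le_one)
  rw [hausdorffMeasure_real] at hmap
  have hms : MeasurableSet (segment ℝ A B) := by
    rw [hseg]; exact hme.measurableSet_image.2 measurableSet_Icc
  have : (μH[1] : Measure E2).restrict (segment ℝ A B) =
      ((volume : Measure ℝ).map (fun s : ℝ => A + s • (B - A))).restrict (segment ℝ A B) := by
    rw [hmap, Measure.restrict_restrict hms, Set.inter_eq_left.2]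
    rw [hseg]; exact Set.image_subset_range _ _
  rw [this, hme.setIntegral_map, hseg, Set.preimage_image_eq _ hiso.injective,
    intervalIntegral.integral_of_le zero_le_one, integral_Icc_eq_integral_Ioc]

lemma seg_fin (A B : E2) (h : dist A B = 1) (f : E2 → ℝ) (hf : Continuous f) :
    IntegrableOn f (segment ℝ A B) (μH[1] : Measure E2) := by
  have hiso : Isometry (fun s : ℝ => A + s • (B - A)) := by
    apply Isometry.of_dist_eq
    intro x y
    rw [dist_add_left, dist_eq_norm, ← sub_smul, norm_smul, ← dist_eq_norm B A, dist_comm B A, h,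
      mul_one, ← dist_eq_norm]
  have hseg : segment ℝ A B = (fun s : ℝ => A + s • (B - A)) '' Set.Icc 0 1 := by
    rw [segment_eq_image']
  have hco : IsCompact (segment ℝ A B) := by
    rw [hseg]; exact isCompact_Icc.image hiso.continuous
  apply hf.continuousOn.integrableOn_of_subset_isCompact hco hco.measurableSet subset_rfl
  rw [hseg, hiso.hausdorffMeasure_image (Or.inl zero_le_one), hausdorffMeasure_real]
  simp

lemma seg_meas (A B : E2) : MeasurableSet (segment ℝ A B) := by
  have : IsCompact (segment ℝ A B) := by
    rw [segment_eq_image']; exact isCompact_Icc.image (by fun_prop)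
  exact this.measurableSet

lemma normsq (x : E2) : ‖x‖ ^ 2 = x 0 ^ 2 + x 1 ^ 2 := by
  rw [EuclideanSpace.real_norm_sq_eq, Fin.sum_univ_two]

lemma pt0 (a b : ℝ) : pt a b 0 = a := rfl
lemma pt1 (a b : ℝ) : pt a b 1 = b := rfl

lemma dist_pt_one (a b c d : ℝ) (h : (a - c) ^ 2 + (b - d) ^ 2 = 1) : dist (pt a b) (pt c d) = 1 := by
  have : ‖pt a b - pt c d‖ ^ 2 = 1 := by
    rw [normsq]; simpa [pt0, pt1] using h
  rw [dist_eq_norm]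
  nlinarith [norm_nonneg (pt a b - pt c d)]

lemma s3 : √3 ^ 2 = 3 := Real.sq_sqrt (by norm_num)

/-- points of a segment satisfy any affine equation valid at the endpoints -/
lemma seg_eq (p q k a b c d : ℝ) (h1 : p * a + q * (√3 * b) = k) (h2 : p * c + q * (√3 * d) = k)
    (x : E2) (hx : x ∈ segment ℝ (pt a b) (pt c d)) : p * x 0 + q * (√3 * x 1) = k := by
  rw [segment_eq_image'] at hx
  obtain ⟨s, -, rfl⟩ := hx
  simp only [PiLp.add_apply, PiLp.smul_apply, PiLp.sub_apply, pt0, pt1, smul_eq_mul]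
  linear_combination (1 - s) * h1 + s * h2

lemma aedis (S T : Set E2) (p q k p' q' k' : ℝ) (hS : ∀ x ∈ S, p * x 0 + q * (√3 * x 1) = k)
    (hT : ∀ x ∈ T, p' * x 0 + q' * (√3 * x 1) = k')
    (h : p * q' - p' * q ≠ 0 ∨ (p = p' ∧ q = q' ∧ k ≠ k')) :
    AEDisjoint (μH[1] : Measure E2) S T := by
  have : (S ∩ T).Subsingleton := by
    rintro x ⟨hx, hx'⟩ y ⟨hy, hy'⟩
    have a1 := hS x hx
    have a2 := hS y hy
    have b1 := hT x hx'
    have b2 := hT y hy'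
    rcases h with h | ⟨rfl, rfl, h⟩
    · have e0 : (p * q' - p' * q) * (x 0 - y 0) = 0 := by
        linear_combination q' * (a1 - a2) - q * (b1 - b2)
      have e1 : (p * q' - p' * q) * (√3 * (x 1 - y 1)) = 0 := by
        linear_combination p * (b1 - b2) - p' * (a1 - a2)
      have f0 := (mul_eq_zero.1 e0).resolve_left h
      have f1 := (mul_eq_zero.1 ((mul_eq_zero.1 e1).resolve_left h)).resolve_left (by positivity)
      ext i
      fin_cases i
      · simp; linarith
      · simp; linarith
    · exact absurd (a1.symm.trans b1) h
  have : NullSingletonClass (μH[1] : Measure E2) := Measure.nullSingletonClass_hausdorff E2 one_pos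
  exact Set.Subsingleton.measure_zero ‹_› _

lemma hex_int (f : E2 → ℝ) (hf : Continuous f) : ∫ x, f x ∂hexP = 1 / 6 * (
    (∫ s in (0:ℝ)..1, f (pt 0 0 + s • (pt 1 0 - pt 0 0))) +
    (∫ s in (0:ℝ)..1, f (pt 1 0 + s • (pt (3/2) (√3/2) - pt 1 0))) +
    (∫ s in (0:ℝ)..1, f (pt (3/2) (√3/2) + s • (pt 1 (√3) - pt (3/2) (√3/2)))) +
    (∫ s in (0:ℝ)..1, f (pt 1 (√3) + s • (pt 0 (√3) - pt 1 (√3)))) +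
    (∫ s in (0:ℝ)..1, f (pt 0 (√3) + s • (pt (-(1/2)) (√3/2) - pt 0 (√3)))) +
    (∫ s in (0:ℝ)..1, f (pt (-(1/2)) (√3/2) + s • (pt 0 0 - pt (-(1/2)) (√3/2))))) := by
  have hs := s3
  have d1 : dist (pt 0 0) (pt 1 0) = 1 := dist_pt_one _ _ _ _ (by norm_num)
  have d2 : dist (pt 1 0) (pt (3/2) (√3/2)) = 1 := dist_pt_one _ _ _ _ (by nlinarith)
  have d3 : dist (pt (3/2) (√3/2)) (pt 1 (√3)) = 1 := dist_pt_one _ _ _ _ (by nlinarith)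
  have d4 : dist (pt 1 (√3)) (pt 0 (√3)) = 1 := dist_pt_one _ _ _ _ (by nlinarith)
  have d5 : dist (pt 0 (√3)) (pt (-(1/2)) (√3/2)) = 1 := dist_pt_one _ _ _ _ (by nlinarith)
  have d6 : dist (pt (-(1/2)) (√3/2)) (pt 0 0) = 1 := dist_pt_one _ _ _ _ (by nlinarith)
  have l1 := seg_eq 0 1 0 0 0 1 0 (by nlinarith) (by nlinarith)
  have l2 := seg_eq 3 (-1) 3 1 0 (3/2) (√3/2) (by nlinarith) (by nlinarith)
  have l3 := seg_eq 3 1 6 (3/2) (√3/2) 1 (√3) (by nlinarith) (by nlinarith)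
  have l4 := seg_eq 0 1 3 1 (√3) 0 (√3) (by nlinarith) (by nlinarith)
  have l5 := seg_eq 3 (-1) (-3) 0 (√3) (-(1/2)) (√3/2) (by nlinarith) (by nlinarith)
  have l6 := seg_eq 3 1 0 (-(1/2)) (√3/2) 0 0 (by nlinarith) (by nlinarith)
  unfold hexP hexL
  rw [integral_smul_measure]
  have m1 := seg_meas (pt 0 0) (pt 1 0)
  have m2 := seg_meas (pt 1 0) (pt (3/2) (√3/2))
  have m3 := seg_meas (pt (3/2) (√3/2)) (pt 1 (√3))
  have m4 := seg_meas (pt 1 (√3)) (pt 0 (√3))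
  have m5 := seg_meas (pt 0 (√3)) (pt (-(1/2)) (√3/2))
  have m6 := seg_meas (pt (-(1/2)) (√3/2)) (pt 0 0)
  have i1 := seg_fin _ _ d1 f hf
  have i2 := seg_fin _ _ d2 f hf
  have i3 := seg_fin _ _ d3 f hf
  have i4 := seg_fin _ _ d4 f hf
  have i5 := seg_fin _ _ d5 f hf
  have i6 := seg_fin _ _ d6 f hf
  rw [← seg_int _ _ d1, ← seg_int _ _ d2, ← seg_int _ _ d3, ← seg_int _ _ d4, ← seg_int _ _ d5,
    ← seg_int _ _ d6]
  have a12 := aedis _ _ _ _ _ _ _ _ l1 l2 (by norm_num)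
  have a13 := aedis _ _ _ _ _ _ _ _ l1 l3 (by norm_num)
  have a14 := aedis _ _ _ _ _ _ _ _ l1 l4 (by norm_num)
  have a15 := aedis _ _ _ _ _ _ _ _ l1 l5 (by norm_num)
  have a16 := aedis _ _ _ _ _ _ _ _ l1 l6 (by norm_num)
  have a23 := aedis _ _ _ _ _ _ _ _ l2 l3 (by norm_num)
  have a24 := aedis _ _ _ _ _ _ _ _ l2 l4 (by norm_num)
  have a25 := aedis _ _ _ _ _ _ _ _ l2 l5 (by norm_num)
  have a26 := aedis _ _ _ _ _ _ _ _ l2 l6 (by norm_num)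
  have a34 := aedis _ _ _ _ _ _ _ _ l3 l4 (by norm_num)
  have a35 := aedis _ _ _ _ _ _ _ _ l3 l5 (by norm_num)
  have a36 := aedis _ _ _ _ _ _ _ _ l3 l6 (by norm_num)
  have a45 := aedis _ _ _ _ _ _ _ _ l4 l5 (by norm_num)
  have a46 := aedis _ _ _ _ _ _ _ _ l4 l6 (by norm_num)
  have a56 := aedis _ _ _ _ _ _ _ _ l5 l6 (by norm_num)
  clear d1 d2 d3 d4 d5 d6 l1 l2 l3 l4 l5 l6
  rw [setIntegral_union₀ ((((a16.union_left a26).union_left a36).union_left a46).union_left a56)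
      m6.nullMeasurableSet ((((i1.union i2).union i3).union i4).union i5) i6,
    setIntegral_union₀ (((a15.union_left a25).union_left a35).union_left a45)
      m5.nullMeasurableSet (((i1.union i2).union i3).union i4) i5,
    setIntegral_union₀ ((a14.union_left a24).union_left a34)
      m4.nullMeasurableSet ((i1.union i2).union i3) i4,
    setIntegral_union₀ (a13.union_left a23)
      m3.nullMeasurableSet (i1.union i2) i3,
    setIntegral_union₀ a12 m2.nullMeasurableSet i1 i2]
  simp

/-- Squared distance to the nearer of the two points, coordinates centred at the hexagon centre. -/
def gg (m0 m1 r e0 e1 x0 x1 : ℝ) : ℝ :=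
  min ((x0 - (m0 + r * e0)) ^ 2 + (x1 - (m1 + r * e1)) ^ 2)
    ((x0 - (m0 - r * e0)) ^ 2 + (x1 - (m1 - r * e1)) ^ 2)

lemma min_abs (a b : ℝ) : min a b = (a + b) / 2 - |a - b| / 2 := by
  rcases le_total a b with h | h
  · rw [min_eq_left h, abs_of_nonpos (by linarith)]; ring
  · rw [min_eq_right h, abs_of_nonneg (by linarith)]; ring

lemma abs_pair (x t : ℝ) : |x - t| + |x + t| = 2 * max |x| |t| := by
  rcases le_total |x| |t| with h | h
  · rw [max_eq_right h]
    rcases abs_cases x with h1 | h1 <;> rcases abs_cases t with h2 | h2 <;>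
    rcases abs_cases (x - t) with h3 | h3 <;> rcases abs_cases (x + t) with h4 | h4 <;> linarith
  · rw [max_eq_left h]
    rcases abs_cases x with h1 | h1 <;> rcases abs_cases t with h2 | h2 <;>
    rcases abs_cases (x - t) with h3 | h3 <;> rcases abs_cases (x + t) with h4 | h4 <;> linarith

lemma gg_eq (m0 m1 r e0 e1 x0 x1 : ℝ) (hr : 0 ≤ r) (he : e0 ^ 2 + e1 ^ 2 = 1) :
    gg m0 m1 r e0 e1 x0 x1 = x0 ^ 2 + x1 ^ 2 + m0 ^ 2 + m1 ^ 2 + r ^ 2 - 2 * (x0 * m0 + x1 * m1)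
      - 2 * r * |(x0 * e0 + x1 * e1) - (m0 * e0 + m1 * e1)| := by
  unfold gg
  rw [min_abs]
  have : (x0 - (m0 + r * e0)) ^ 2 + (x1 - (m1 + r * e1)) ^ 2 -
    ((x0 - (m0 - r * e0)) ^ 2 + (x1 - (m1 - r * e1)) ^ 2) =
    -(4 * r * ((x0 * e0 + x1 * e1) - (m0 * e0 + m1 * e1))) := by ring
  rw [this, abs_neg, abs_mul, abs_of_nonneg (by positivity : 0 ≤ 4 * r)]
  linear_combination r ^ 2 * he

lemma gg_pair (m0 m1 r e0 e1 x0 x1 : ℝ) (hr : 0 ≤ r) (he : e0 ^ 2 + e1 ^ 2 = 1) :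
    gg m0 m1 r e0 e1 x0 x1 + gg m0 m1 r e0 e1 (-x0) (-x1) =
      2 * (x0 ^ 2 + x1 ^ 2 + m0 ^ 2 + m1 ^ 2 + r ^ 2)
      - 4 * r * max |x0 * e0 + x1 * e1| |m0 * e0 + m1 * e1| := by
  rw [gg_eq _ _ _ _ _ _ _ hr he, gg_eq _ _ _ _ _ _ _ hr he]
  have h1 := abs_pair (x0 * e0 + x1 * e1) (m0 * e0 + m1 * e1)
  have h2 : |(-x0 * e0 + -x1 * e1) - (m0 * e0 + m1 * e1)| =
    |(x0 * e0 + x1 * e1) + (m0 * e0 + m1 * e1)| := by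
    rw [← abs_neg]; congr 1; ring
  rw [h2]
  linear_combination (-2 * r) * h1

lemma gg_cont (m0 m1 r e0 e1 : ℝ) (p q : ℝ → ℝ) (hp : Continuous p) (hq : Continuous q) :
    Continuous fun s => gg m0 m1 r e0 e1 (p s) (q s) := by
  unfold gg; fun_prop

lemma gg_side (m0 m1 r e0 e1 p0 p1 q0 q1 : ℝ) (hr : 0 ≤ r) (he : e0 ^ 2 + e1 ^ 2 = 1)
    (hp : p0 ^ 2 + p1 ^ 2 = 1) (hq : q0 ^ 2 + q1 ^ 2 = 1) (hpq : p0 * q0 + p1 * q1 = 1 / 2) :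
    (∫ s in (0:ℝ)..1, gg m0 m1 r e0 e1 (p0 + s * (q0 - p0)) (p1 + s * (q1 - p1))) +
    (∫ s in (0:ℝ)..1, gg m0 m1 r e0 e1 (-(p0 + s * (q0 - p0))) (-(p1 + s * (q1 - p1)))) =
    2 * (5 / 6 + m0 ^ 2 + m1 ^ 2 + r ^ 2) -
      4 * r * Iav |m0 * e0 + m1 * e1| (p0 * e0 + p1 * e1) (q0 * e0 + q1 * e1) := by
  rw [← intervalIntegral.integral_add
    ((gg_cont _ _ _ _ _ _ _ (by fun_prop) (by fun_prop)).intervalIntegrable _ _)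
    ((gg_cont _ _ _ _ _ _ _ (by fun_prop) (by fun_prop)).intervalIntegrable _ _)]
  have h : ∀ s : ℝ, gg m0 m1 r e0 e1 (p0 + s * (q0 - p0)) (p1 + s * (q1 - p1)) +
      gg m0 m1 r e0 e1 (-(p0 + s * (q0 - p0))) (-(p1 + s * (q1 - p1))) =
      (2 * (1 + m0 ^ 2 + m1 ^ 2 + r ^ 2) + (-2) * s + 2 * s ^ 2) -
      4 * r * max |(p0 * e0 + p1 * e1) + s * ((q0 * e0 + q1 * e1) - (p0 * e0 + p1 * e1))|
        |m0 * e0 + m1 * e1| := by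
    intro s
    rw [gg_pair _ _ _ _ _ _ _ hr he]
    have h2 : (p0 + s * (q0 - p0)) * e0 + (p1 + s * (q1 - p1)) * e1 =
      (p0 * e0 + p1 * e1) + s * ((q0 * e0 + q1 * e1) - (p0 * e0 + p1 * e1)) := by ring
    rw [h2]
    linear_combination 2 * (1 - s) ^ 2 * hp + 2 * s ^ 2 * hq + 4 * s * (1 - s) * hpq
  simp_rw [h]
  rw [intervalIntegral.integral_sub (Continuous.intervalIntegrable (by fun_prop) _ _)
    (Continuous.intervalIntegrable (by fun_prop) _ _), intervalIntegral.integral_const_mul,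
    intervalIntegral.integral_add (Continuous.intervalIntegrable (by fun_prop) _ _)
    (Continuous.intervalIntegrable (by fun_prop) _ _),
    intervalIntegral.integral_add (Continuous.intervalIntegrable (by fun_prop) _ _)
    (Continuous.intervalIntegrable (by fun_prop) _ _), intervalIntegral.integral_const_mul,
    intervalIntegral.integral_const_mul, intervalIntegral.integral_const_mul, integral_pow, integral_id]
  unfold Iav
  simp
  ring

lemma formula (m0 m1 r e0 e1 : ℝ) (hr : 0 ≤ r) (he : e0 ^ 2 + e1 ^ 2 = 1) :
    ∫ x, min (‖x - pt (1/2 + m0 + r * e0) (√3/2 + m1 + r * e1)‖ ^ 2)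
      (‖x - pt (1/2 + m0 - r * e0) (√3/2 + m1 - r * e1)‖ ^ 2) ∂hexP =
    5 / 6 + m0 ^ 2 + m1 ^ 2 + r ^ 2 -
      2 * r / 3 * Phi |m0 * e0 + m1 * e1| e0 (-(e0 / 2 + √3 / 2 * e1)) (-e0 / 2 + √3 / 2 * e1) := by
  have key : ∀ x : E2, min (‖x - pt (1/2 + m0 + r * e0) (√3/2 + m1 + r * e1)‖ ^ 2)
      (‖x - pt (1/2 + m0 - r * e0) (√3/2 + m1 - r * e1)‖ ^ 2) =
      gg m0 m1 r e0 e1 (x 0 - 1/2) (x 1 - √3/2) := by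
    intro x
    unfold gg
    rw [normsq, normsq]
    simp only [PiLp.sub_apply, pt0, pt1]
    congr 1 <;> ring
  have hs := s3
  have s1 := gg_side m0 m1 r e0 e1 1 0 (1/2) (√3/2) hr he (by norm_num) (by nlinarith) (by norm_num)
  have s2 := gg_side m0 m1 r e0 e1 (1/2) (√3/2) (-(1/2)) (√3/2) hr he (by nlinarith) (by nlinarith)
    (by nlinarith)
  have s4 := gg_side m0 m1 r e0 e1 (-(1/2)) (√3/2) (-1) 0 hr he (by nlinarith) (by nlinarith)
    (by nlinarith)
  rw [hex_int _ (by fun_prop)]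
  simp_rw [key]
  simp only [PiLp.add_apply, PiLp.smul_apply, PiLp.sub_apply, pt0, pt1, smul_eq_mul]
  have hP : Phi |m0 * e0 + m1 * e1| e0 (-(e0 / 2 + √3 / 2 * e1)) (-e0 / 2 + √3 / 2 * e1) =
      Iav |m0 * e0 + m1 * e1| (1 * e0 + 0 * e1) (1 / 2 * e0 + √3 / 2 * e1) +
      Iav |m0 * e0 + m1 * e1| (1 / 2 * e0 + √3 / 2 * e1) (-(1/2) * e0 + √3 / 2 * e1) +
      Iav |m0 * e0 + m1 * e1| (-(1/2) * e0 + √3 / 2 * e1) (-1 * e0 + 0 * e1) := by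
    unfold Phi
    rw [Iav_neg, neg_neg]
    congr 1
    · congr 1
      · congr 1 <;> ring
      · congr 1 <;> ring
    · congr 1 <;> ring
  rw [hP]
  have c1 : ∀ s : ℝ, gg m0 m1 r e0 e1 (0 + s * (1 - 0) - 1/2) (0 + s * (0 - 0) - √3/2) =
      gg m0 m1 r e0 e1 (-(1/2 + s * (-(1/2) - 1/2))) (-(√3/2 + s * (√3/2 - √3/2))) := by
    intro s; congr 1 <;> ring
  have c2 : ∀ s : ℝ, gg m0 m1 r e0 e1 (1 + s * (3/2 - 1) - 1/2) (0 + s * (√3/2 - 0) - √3/2) =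
      gg m0 m1 r e0 e1 (-(-(1/2) + s * (-1 - -(1/2)))) (-(√3/2 + s * (0 - √3/2))) := by
    intro s; congr 1 <;> ring
  have c3 : ∀ s : ℝ, gg m0 m1 r e0 e1 (3/2 + s * (1 - 3/2) - 1/2) (√3/2 + s * (√3 - √3/2) - √3/2) =
      gg m0 m1 r e0 e1 (1 + s * (1/2 - 1)) (0 + s * (√3/2 - 0)) := by
    intro s; congr 1 <;> ring
  have c4 : ∀ s : ℝ, gg m0 m1 r e0 e1 (1 + s * (0 - 1) - 1/2) (√3 + s * (√3 - √3) - √3/2) =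
      gg m0 m1 r e0 e1 (1/2 + s * (-(1/2) - 1/2)) (√3/2 + s * (√3/2 - √3/2)) := by
    intro s; congr 1 <;> ring
  have c5 : ∀ s : ℝ, gg m0 m1 r e0 e1 (0 + s * (-(1/2) - 0) - 1/2) (√3 + s * (√3/2 - √3) - √3/2) =
      gg m0 m1 r e0 e1 (-(1/2) + s * (-1 - -(1/2))) (√3/2 + s * (0 - √3/2)) := by
    intro s; congr 1 <;> ring
  have c6 : ∀ s : ℝ, gg m0 m1 r e0 e1 (-(1/2) + s * (0 - -(1/2)) - 1/2) (√3/2 + s * (0 - √3/2) - √3/2) =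
      gg m0 m1 r e0 e1 (-(1 + s * (1/2 - 1))) (-(0 + s * (√3/2 - 0))) := by
    intro s; congr 1 <;> ring
  simp_rw [c1, c2, c3, c4, c5, c6]
  linear_combination (1/6) * (s1 + s2 + s4)

lemma exists_polar (x y : ℝ) : ∃ r e0 e1 : ℝ, 0 ≤ r ∧ e0 ^ 2 + e1 ^ 2 = 1 ∧ x = r * e0 ∧ y = r * e1 := by
  by_cases h : x ^ 2 + y ^ 2 = 0
  · refine ⟨0, 1, 0, le_rfl, by norm_num, ?_, ?_⟩ <;> nlinarith
  · have hp : 0 < x ^ 2 + y ^ 2 := lt_of_le_of_ne (by positivity) (Ne.symm h)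
    have hq := Real.sqrt_pos.2 hp
    have hs := Real.sq_sqrt hp.le
    refine ⟨√(x ^ 2 + y ^ 2), x / √(x ^ 2 + y ^ 2), y / √(x ^ 2 + y ^ 2), hq.le, ?_, ?_, ?_⟩
    · rw [div_pow, div_pow, hs]; field_simp
    · field_simp
    · field_simp

lemma lower (a b : E2) : 71 / 144 ≤ ∫ x, min (‖x - a‖ ^ 2) (‖x - b‖ ^ 2) ∂hexP := by
  obtain ⟨r, e0, e1, hr, he, h0, h1⟩ := exists_polar ((a 0 - b 0) / 2) ((a 1 - b 1) / 2)
  have ha : a = pt (1/2 + ((a 0 + b 0) / 2 - 1/2) + r * e0) (√3/2 + ((a 1 + b 1) / 2 - √3/2) + r * e1) := by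
    ext i; fin_cases i
    · simp only [Fin.zero_eta, pt0]; linarith
    · simp only [Fin.mk_one, pt1]; linarith
  have hb : b = pt (1/2 + ((a 0 + b 0) / 2 - 1/2) - r * e0) (√3/2 + ((a 1 + b 1) / 2 - √3/2) - r * e1) := by
    ext i; fin_cases i
    · simp only [Fin.zero_eta, pt0]; linarith
    · simp only [Fin.mk_one, pt1]; linarith
  generalize (a 0 + b 0) / 2 - 1/2 = m0 at ha hb
  generalize (a 1 + b 1) / 2 - √3/2 = m1 at ha hb
  rw [ha, hb, formula _ _ _ _ _ hr he]
  obtain ⟨G, hG, hP⟩ := Phi_le |m0 * e0 + m1 * e1| e0 (-(e0 / 2 + √3 / 2 * e1)) (-e0 / 2 + √3 / 2 * e1)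
    (abs_nonneg _) (by ring) (by linear_combination (3/2) * he + e1 ^ 2 / 2 * s3)
  rw [sq_abs] at hG
  have hm : (m0 * e0 + m1 * e1) ^ 2 ≤ m0 ^ 2 + m1 ^ 2 := by
    have : (m0 * e0 + m1 * e1) ^ 2 + (m0 * e1 - m1 * e0) ^ 2 = m0 ^ 2 + m1 ^ 2 := by
      linear_combination (m0 ^ 2 + m1 ^ 2) * he
    nlinarith [sq_nonneg (m0 * e1 - m1 * e0)]
  nlinarith [mul_le_mul_of_nonneg_left hP hr, sq_nonneg (r - G)]

lemma value : ∫ x, min (‖x - pt (13/12) (√3 / 2)‖ ^ 2) (‖x - pt (-(1/12)) (√3 / 2)‖ ^ 2) ∂hexP = 71 / 144 := by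
  have h := formula 0 0 (7/12) 1 0 (by norm_num) (by norm_num)
  have hP := Phi_val
  have e1 : pt (1/2 + 0 + 7/12 * 1) (√3/2 + 0 + 7/12 * 0) = pt (13/12) (√3/2) := by
    congr 1 <;> ring
  have e2 : pt (1/2 + 0 - 7/12 * 1) (√3/2 + 0 - 7/12 * 0) = pt (-(1/12)) (√3/2) := by
    congr 1 <;> ring
  have e3 : Phi |0 * 1 + 0 * 0| 1 (-(1 / 2 + √3 / 2 * 0)) (-1 / 2 + √3 / 2 * 0) =
    Phi 0 1 (-(1/2)) (-(1/2)) := by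
    congr 1
    · simp
    · ring
    · ring
  rw [e1, e2, e3, hP] at h
  rw [h]; norm_num

lemma sInf_two (a b x : E2) : sInf ((fun a => ‖x - a‖ ^ 2) '' {a, b}) = min (‖x - a‖ ^ 2) (‖x - b‖ ^ 2) := by
  rw [Set.image_pair, csInf_pair]

/-- The set `{(13/12, √3/2), (-1/12, √3/2)}` forms an optimal set of two-means
for the uniform distribution on the hexagon boundary, and `V₂ = 71/144`. -/
theorem stmt_2 :
    IsOptimalSet hexP 2
      {pt (13/12) (Real.sqrt 3 / 2), pt (-(1/12)) (Real.sqrt 3 / 2)} ∧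
    quantErr hexP 2 = 71 / 144 := by
  have hval : ∫ x, sInf ((fun a => ‖x - a‖ ^ 2) ''
      {pt (13/12) (Real.sqrt 3 / 2), pt (-(1/12)) (Real.sqrt 3 / 2)}) ∂hexP = 71 / 144 := by
    simp_rw [sInf_two]; exact value
  have hcard : ({pt (13/12) (Real.sqrt 3 / 2), pt (-(1/12)) (Real.sqrt 3 / 2)} : Set E2).ncard ≤ 2 :=
    (Set.ncard_insert_le _ _).trans (by simp)
  have hq : quantErr hexP 2 = 71 / 144 := by
    unfold quantErr
    apply IsLeast.csInf_eq
    refine ⟨⟨_, Set.toFinite _, Set.insert_nonempty _ _, hcard, hval.symm⟩, ?_⟩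
    rintro v ⟨α, hfin, hne, hc, rfl⟩
    have : ∃ a b, α = {a, b} := by
      have hpos := (Set.ncard_pos hfin).2 hne
      rcases (by omega : α.ncard = 1 ∨ α.ncard = 2) with h | h
      · obtain ⟨a, rfl⟩ := Set.ncard_eq_one.1 h
        exact ⟨a, a, by simp⟩
      · obtain ⟨a, b, -, rfl⟩ := Set.ncard_eq_two.1 h
        exact ⟨a, b, rfl⟩
    obtain ⟨a, b, rfl⟩ := this
    simp_rw [sInf_two]
    exact lower a b
  exact ⟨⟨Set.toFinite _, Set.insert_nonempty _ _, hcard, hval.trans hq.symm⟩, hq⟩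
end
end

section
/- Let P be the uniform probability distribution on the boundary L of the regular hexagon with vertices O(0,0), A₁(1,0), A₂(3/2,√3/2), A₃(1,√3), A₄(0,√3), A₅(−1/2,√3/2), and let n = 6k for a positive integer k. Set r = 2(√13(k−1)−4)/(13(k−1)²−16). Then the set αₙ = {(r/8, √3 r/8), (1−r/8, √3 r/8), ((6−r)/4, √3/2), (1−r/8, −√3(r−8)/8), (r/8, −√3(r−8)/8), ((r−2)/4, √3/2)} ∪ γ ∪ ⋃_{i=1}^5 T_i(γ) forms an optimal set of n-means, where γ = {(r + (2j−1)(1−2r)/(2(k−1)), 0) : j = 1, …, k−1} if k ≥ 2 and γ = ∅ if k = 1, and where T_i (1 ≤ i ≤ 5) is the rotation of ℝ² about the center (1/2, √3/2) of the hexagon by angle iπ/3 (so that T_i maps the side OA₁ onto A_iA_{i+1} for 1 ≤ i ≤ 4 and onto A₅O for i = 5). Moreover, the quantization error is Vₙ(P) = 13(13(k−1)² − 8√13(k−1) + 16)/(12(16 − 13(k−1)²)²). -/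
open MeasureTheory Real Filter
open scoped ENNReal

noncomputable section

/-- Rotation of the plane about the center `(1/2, √3/2)` of the hexagon by
angle `θ`. -/
def rotHex (θ : ℝ) (x : E2) : E2 :=
  pt (1/2 + (x 0 - 1/2) * Real.cos θ - (x 1 - Real.sqrt 3 / 2) * Real.sin θ)
     (Real.sqrt 3 / 2 + (x 0 - 1/2) * Real.sin θ + (x 1 - Real.sqrt 3 / 2) * Real.cos θ)

/-- The set `γ = {(r + (2j-1)(1-2r)/(2(k-1)), 0) : j = 1, …, k-1}` of `k-1`
points on the side `OA₁`; it is empty when `k = 1`. -/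
def gam (k : ℕ) (r : ℝ) : Set E2 :=
  {p | ∃ j : ℕ, 1 ≤ j ∧ j ≤ k - 1 ∧
    p = pt (r + (2 * (j : ℝ) - 1) / (2 * ((k : ℝ) - 1)) * (1 - 2 * r)) 0}


noncomputable section

/-- helper -/
def kap : ℝ := 13/8 - 13 * Real.sqrt 13 / 32
/-- helper -/
def rho (t : ℝ) : ℝ := max 0 (kap * (1 - 4 * t ^ 2))

lemma z_sq : Real.sqrt 13 ^ 2 = 13 := Real.sq_sqrt (by norm_num)
lemma z_lo : 3.6055 < Real.sqrt 13 := Real.lt_sqrt_of_sq_lt (by norm_num)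
lemma z_hi : Real.sqrt 13 < 3.6056 := by
  rw [Real.sqrt_lt' (by norm_num)]; norm_num

lemma kap_lo : 0.16 < kap := by have := z_hi; unfold kap; linarith
lemma kap_hi : kap < 13/80 := by have := z_lo; unfold kap; linarith

lemma rho_cont : Continuous rho := by unfold rho; fun_prop
lemma rho_nonneg (t : ℝ) : 0 ≤ rho t := le_max_left _ _
lemma rho_ge (t : ℝ) : kap * (1 - 4 * t ^ 2) ≤ rho t := le_max_right _ _
lemma rho_small {t : ℝ} (h0 : 0 ≤ t) (h : t ≤ 1/2) : rho t = kap * (1 - 4 * t ^ 2) := by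
  unfold rho; apply max_eq_right
  have := kap_lo
  have : 0 ≤ 1 - 4 * t^2 := by nlinarith
  positivity
lemma rho_big {t : ℝ} (h : 1/2 ≤ t) : rho t = 0 := by
  unfold rho; apply max_eq_left
  have := kap_lo
  have : 0 ≤ 4 * t^2 - 1 := by nlinarith
  nlinarith

lemma int_quad (a b c y : ℝ) : ∫ t in (0:ℝ)..y, (a + b * t + c * t ^ 2) = a * y + b * y^2/2 + c * y^3/3 := by
  have i1 : IntervalIntegrable (fun _ : ℝ => a) volume 0 y := Continuous.intervalIntegrable (by fun_prop) _ _
  have i2 : IntervalIntegrable (fun t : ℝ => b * t) volume 0 y := Continuous.intervalIntegrable (by fun_prop) _ _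
  have i3 : IntervalIntegrable (fun t : ℝ => c * t^2) volume 0 y := Continuous.intervalIntegrable (by fun_prop) _ _
  rw [intervalIntegral.integral_add (i1.add i2) i3, intervalIntegral.integral_add i1 i2,
    intervalIntegral.integral_const_mul, intervalIntegral.integral_const_mul, integral_pow, integral_id]
  simp; ring

lemma int_rho_small {y : ℝ} (h0 : 0 ≤ y) (h : y ≤ 1/2) :
    ∫ t in (0:ℝ)..y, rho t = kap * y - 4/3 * kap * y^3 := by
  have : ∫ t in (0:ℝ)..y, rho t = ∫ t in (0:ℝ)..y, (kap + 0 * t + (-4*kap) * t^2) := by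
    apply intervalIntegral.integral_congr
    intro t ht
    rw [Set.uIcc_of_le h0] at ht
    simp only
    rw [rho_small ht.1 (ht.2.trans h)]; ring
  rw [this, int_quad]; ring

lemma int_rho_big {y : ℝ} (h : 1/2 ≤ y) : ∫ t in (0:ℝ)..y, rho t = kap / 3 := by
  rw [← intervalIntegral.integral_add_adjacent_intervals (b := 1/2)
    (rho_cont.intervalIntegrable _ _) (rho_cont.intervalIntegrable _ _)]
  rw [int_rho_small (by norm_num) le_rfl]
  have : ∫ t in (1/2:ℝ)..y, rho t = ∫ t in (1/2:ℝ)..y, 0 := by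
    apply intervalIntegral.integral_congr
    intro t ht
    rw [Set.uIcc_of_le h] at ht
    exact rho_big ht.1
  rw [this]; simp; ring

lemma pos_int {f : ℝ → ℝ} (hf : Continuous f) {y l : ℝ} (hy : 0 ≤ y) (hl : 0 ≤ l)
    (h1 : ∀ t, 0 ≤ t → t ≤ y → 0 ≤ f t) (h2 : ∀ t, y ≤ t → f t ≤ 0) :
    ∫ t in (0:ℝ)..l, max (f t) 0 ≤ ∫ t in (0:ℝ)..y, f t := by
  have hg : Continuous (fun t => max (f t) 0) := by fun_prop
  have h3 : ∫ t in (0:ℝ)..l, max (f t) 0 ≤ ∫ t in (0:ℝ)..(max l y), max (f t) 0 := by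
    apply intervalIntegral.integral_mono_interval le_rfl hl (le_max_left _ _)
    · exact Eventually.of_forall fun t => le_max_right _ _
    · exact hg.intervalIntegrable _ _
  refine h3.trans ?_
  rw [← intervalIntegral.integral_add_adjacent_intervals (b := y)
    (hg.intervalIntegrable _ _) (hg.intervalIntegrable _ _)]
  have e1 : ∫ t in (0:ℝ)..y, max (f t) 0 = ∫ t in (0:ℝ)..y, f t := by
    apply intervalIntegral.integral_congr
    intro t ht
    rw [Set.uIcc_of_le hy] at ht
    exact max_eq_left (h1 t ht.1 ht.2)
  have e2 : ∫ t in y..(max l y), max (f t) 0 = ∫ t in y..(max l y), 0 := by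
    apply intervalIntegral.integral_congr
    intro t ht
    rw [Set.uIcc_of_le (le_max_right _ _)] at ht
    exact max_eq_right (h2 t ht.1)
  rw [e1, e2]; simp

lemma single {u p l : ℝ} {g : ℝ → ℝ} (hg : Continuous g) (hu : 0 ≤ u) (hl : 0 ≤ l)
    (h : ∀ t, 0 ≤ t → g t ≤ u^2 - (t-p)^2) : ∫ t in (0:ℝ)..l, max (g t) 0 ≤ 4/3 * u^3 := by
  have hc : Continuous (fun t : ℝ => max (u^2 - (t-p)^2) 0) := by fun_prop
  have hc' : Continuous (fun t : ℝ => max (u^2 - t^2) 0) := by fun_prop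
  have hq : Continuous (fun t : ℝ => u^2 - t^2) := by fun_prop
  have h1 : ∫ t in (0:ℝ)..l, max (g t) 0 ≤ ∫ t in (0:ℝ)..l, max (u^2 - (t-p)^2) 0 := by
    apply intervalIntegral.integral_mono_on hl
    · apply Continuous.intervalIntegrable; fun_prop
    · exact hc.intervalIntegrable _ _
    · intro t ht; exact max_le_max_right _ (h t ht.1)
  have h2 : ∫ t in (0:ℝ)..l, max (u^2 - (t-p)^2) 0 = ∫ t in (0-p)..(l-p), max (u^2 - t^2) 0 :=
    intervalIntegral.integral_comp_sub_right (fun t => max (u^2 - t^2) 0) p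
  have hh : ∀ l : ℝ, 0 ≤ l → ∫ t in (0:ℝ)..l, max (u^2 - t^2) 0 ≤ 2/3 * u^3 := by
    intro l hl
    have := pos_int hq hu hl (fun t a b => by nlinarith) (fun t a => by nlinarith)
    refine this.trans (le_of_eq ?_)
    have e : ∫ t in (0:ℝ)..u, (u^2 - t^2) = ∫ t in (0:ℝ)..u, (u^2 + 0 * t + (-1) * t^2) := by
      congr 1; ext t; ring
    rw [e, int_quad]; ring
  have h3 : ∫ t in (0-p)..(l-p), max (u^2 - t^2) 0 ≤
      ∫ t in (-(|p|+l))..(|p|+l), max (u^2 - t^2) 0 := by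
    have := neg_abs_le p
    have := le_abs_self p
    apply intervalIntegral.integral_mono_interval (by linarith) (by linarith) (by linarith)
    · exact Eventually.of_forall fun t => le_max_right _ _
    · exact hc'.intervalIntegrable _ _
  have h4 : ∫ t in (-(|p|+l))..(|p|+l), max (u^2 - t^2) 0 ≤ 4/3 * u^3 := by
    rw [← intervalIntegral.integral_add_adjacent_intervals (b := 0)
      (hc'.intervalIntegrable _ _) (hc'.intervalIntegrable _ _)]
    have e : ∫ t in (-(|p|+l))..0, max (u^2 - t^2) 0 = ∫ t in (0:ℝ)..(|p|+l), max (u^2 - t^2) 0 := by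
      have := intervalIntegral.integral_comp_neg (a := 0) (b := |p|+l) (fun t : ℝ => max (u^2 - t^2) 0)
      simp only [neg_zero, even_two, Even.neg_pow] at this
      exact this.symm
    have := hh (|p|+l) (by positivity)
    rw [e]; linarith
  linarith

/-- helper -/
def JJ (l N p : ℝ) : ℝ := ∫ t in (0:ℝ)..l, max (13/16 - rho t - N + 2 * t * p - t^2) 0

set_option maxHeartbeats 2000000 in
lemma arm {A p : ℝ} (hA : kap ≤ A) (hAp : A + p^2 ≤ 13/16) {l : ℝ} (hl : 0 ≤ l) :
    ∃ y R, 0 ≤ y ∧ y ≤ 2 ∧ ∫ t in (0:ℝ)..l, max (A - rho t + 2 * t * p - t^2) 0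
      ≤ A * y + p * y^2 - y^3/3 - R ∧ ((1/2 ≤ y ∧ R = kap/3) ∨ (y ≤ 1/2 ∧ R = 2/3 * kap * y)) := by
  have hk := kap_lo
  have hk' := kap_hi
  have hf : Continuous (fun t => A - rho t + 2 * t * p - t^2) := by
    have := rho_cont; fun_prop
  have hint : ∀ y, ∫ t in (0:ℝ)..y, (A - rho t + 2 * t * p - t^2)
      = A * y + p * y^2 - y^3/3 - ∫ t in (0:ℝ)..y, rho t := by
    intro y
    have : ∫ t in (0:ℝ)..y, (A - rho t + 2 * t * p - t^2)
      = ∫ t in (0:ℝ)..y, ((A + (2*p) * t + (-1) * t^2) - rho t) := by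
      congr 1; ext t; ring
    rw [this, intervalIntegral.integral_sub _ (rho_cont.intervalIntegrable _ _), int_quad]
    · ring
    · apply Continuous.intervalIntegrable; fun_prop
  by_cases hq : 0 ≤ A + p - 1/4
  · set S := Real.sqrt (p^2 + A) with hS
    have hS2 : S^2 = p^2 + A := Real.sq_sqrt (by nlinarith)
    have hS0 : 0 ≤ S := Real.sqrt_nonneg _
    have hy1 : 1/2 ≤ p + S := by
      have : 1/2 - p ≤ S := by
        exact Real.le_sqrt_of_sq_le (by nlinarith)
      linarith
    have hS1 : S ≤ 0.95 := by nlinarith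
    have hp1 : p ≤ 0.95 := by nlinarith
    refine ⟨p + S, kap/3, by linarith, by linarith, ?_, Or.inl ⟨hy1, rfl⟩⟩
    refine (pos_int hf (y := p + S) (by linarith) hl ?_ ?_).trans ?_
    · intro t h0 h1
      have hSp : p ≤ S ∧ -p ≤ S := ⟨Real.le_sqrt_of_sq_le (by linarith), Real.le_sqrt_of_sq_le (by linarith)⟩
      have hqt : 0 ≤ A + 2 * t * p - t^2 := by
        linarith [mul_nonneg (sub_nonneg.2 h1) (by linarith [hSp.1] : 0 ≤ S - p + t)]
      rcases le_total t (1/2) with h | h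
      · rw [rho_small h0 h]
        have g1 := mul_nonneg h0 (sub_nonneg.2 h)
        have g2 := mul_nonneg h0 hq
        have g3 := mul_nonneg (by linarith : 0 ≤ 1 - 4 * kap) g1
        have g4 := mul_nonneg (by linarith : 0 ≤ A - kap) (by linarith : 0 ≤ 1 - 2 * t)
        linarith
      · rw [rho_big h]; linarith
    · intro t h1
      have := rho_nonneg t
      have hSp : p ≤ S ∧ -p ≤ S := ⟨Real.le_sqrt_of_sq_le (by linarith), Real.le_sqrt_of_sq_le (by linarith)⟩
      linarith [mul_nonneg (sub_nonneg.2 h1) (by linarith [hSp.1] : 0 ≤ S - p + t)]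
    · rw [hint, int_rho_big hy1]
  · push Not at hq
    set C := 1 - 4 * kap with hC
    have hC0 : 0.35 ≤ C := by linarith
    set S := Real.sqrt (p^2 + (A - kap) * C) with hS
    have hS2 : S^2 = p^2 + (A - kap) * C := Real.sq_sqrt (by nlinarith)
    have hS0 : 0 ≤ S := Real.sqrt_nonneg _
    have hac : 0 ≤ (A - kap) * C := mul_nonneg (by linarith) (by linarith)
    have hSp : p ≤ S ∧ -p ≤ S := ⟨Real.le_sqrt_of_sq_le (by linarith), Real.le_sqrt_of_sq_le (by linarith)⟩
    obtain ⟨y, hy⟩ : ∃ y, y * C = p + S := ⟨(p + S)/C, by field_simp⟩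
    have hy0 : 0 ≤ y := by nlinarith
    have hroot : (A - kap) + 2 * p * y - C * y^2 = 0 := by
      have : C * ((A - kap) + 2 * p * y - C * y^2) = 0 := by
        have : S = y * C - p := by linarith
        rw [this] at hS2; linarith
      rcases mul_eq_zero.1 this with h | h
      · linarith
      · exact h
    have hge : ∀ t, 0 ≤ t → t ≤ y → 0 ≤ (A - kap) + 2 * p * t - C * t^2 := by
      intro t h0 h1
      have h5 : p + S = y * C := hy.symm
      have h6 : 0 ≤ (y - t) * (C * (y + t) - 2 * p) := by
        apply mul_nonneg (by linarith)
        have : 0 ≤ t * C := by positivity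
        nlinarith
      have h7 : (A - kap) + 2 * p * t - C * t^2 = (y - t) * (C * (y + t) - 2 * p) := by
        linear_combination hroot
      rw [h7]; exact h6
    have hle : ∀ t, y ≤ t → (A - kap) + 2 * p * t - C * t^2 ≤ 0 := by
      intro t h1
      have h6 : 0 ≤ (t - y) * (C * (y + t) - 2 * p) := by
        apply mul_nonneg (by linarith)
        have : 0 ≤ t * C := mul_nonneg (hy0.trans h1) (by linarith)
        nlinarith
      have h7 : (A - kap) + 2 * p * t - C * t^2 = -((t - y) * (C * (y + t) - 2 * p)) := by
        linear_combination hroot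
      rw [h7]; linarith
    have hy2 : y ≤ 1/2 := by
      by_contra h
      push Not at h
      have := hge (1/2) (by norm_num) h.le
      rw [hC] at this; linarith
    refine ⟨y, 2/3 * kap * y, hy0, by linarith, ?_, Or.inr ⟨hy2, rfl⟩⟩
    refine (pos_int hf (y := y) hy0 hl ?_ ?_).trans ?_
    · intro t h0 h1
      rw [rho_small h0 (h1.trans hy2)]
      have := hge t h0 h1
      rw [hC] at this; linarith
    · intro t h1
      have := rho_ge t
      have := hle t h1
      rw [hC] at this; linarith
    · rw [hint, int_rho_small hy0 hy2]
      have : 0 ≤ kap * y * (1/4 - y^2) := by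
        apply mul_nonneg (by positivity); nlinarith
      linarith

lemma corner_poly {p1 p2 y1 y2 : ℝ} (hw : 0 < y1 + y2) :
    (-(4/3 * (p1^2+p2^2+p1*p2))) * (y1 + y2) + p1 * y1^2 + p2 * y2^2 - y1^3/3 - y2^3/3 ≤
      - (y1+y2)^3/12 + (y1*y2)^2/(4*(y1+y2)) := by
  have : - (y1+y2)^3/12 + (y1*y2)^2/(4*(y1+y2)) =
     (- (y1+y2)^4/12 + (y1*y2)^2/4)/(y1+y2)   := by field_simp
  rw [this, le_div_iff₀ hw]
  linarith [sq_nonneg ((p1+p2)*(y1+y2) - (y1^2+y2^2)/4),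
    sq_nonneg ((p1-p2)*(y1+y2) - 3*(y1^2-y2^2)/4)]

lemma hmix (a b : ℝ) (ha : 0 ≤ a) (ha' : a ≤ 1/2) (hb : 1/2 ≤ b) (hb' : b ≤ 2) :
    (a*b)^2/(4*(a+b)) ≤ kap/3 + 2/3 * kap * a := by
  have hk := kap_lo
  rw [div_le_iff₀ (by positivity)]
  have k1 : 0.16/3 * (1 + 2*a) ≤ kap/3 + 2/3*kap*a := by nlinarith
  have k2 : 0.16/3 * (1 + 2*a) * (4 * (a+b)) ≤ (kap/3 + 2/3*kap*a) * (4 * (a+b)) :=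
    mul_le_mul_of_nonneg_right k1 (by positivity)
  refine le_trans ?_ k2
  have h1 : a^2*b^2 ≤ a/2 * b^2 := by
    apply mul_le_mul_of_nonneg_right _ (by positivity); nlinarith
  have h2 := sq_nonneg (a - 1/2)
  have h3 := mul_nonneg (by linarith : 0 ≤ 1 - 2*a) (sub_nonneg.2 hb)
  have h4 := mul_nonneg (mul_nonneg ha (sub_nonneg.2 hb')) (sub_nonneg.2 hb)
  have h5 := mul_nonneg ha (sub_nonneg.2 hb')
  linarith

set_option maxHeartbeats 2000000 in
lemma corner_main {N p1 p2 l : ℝ} (hl : 0 ≤ l) (hN : N = 4/3 * (p1^2+p2^2+p1*p2)) :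
    JJ l N p1 + JJ l N p2 ≤ 13 * Real.sqrt 13 / 48 := by
  have hk := kap_lo
  have hk' := kap_hi
  have hz := z_sq
  have hzl := z_lo
  have hzh := z_hi
  have hc : ∀ p, Continuous (fun t => 13/16 - rho t - N + 2 * t * p - t^2) := by
    intro p; have := rho_cont; fun_prop
  have hd1 : N - p1^2 = (p1 + 2*p2)^2/3 := by rw [hN]; ring
  have hd2 : N - p2^2 = (p2 + 2*p1)^2/3 := by rw [hN]; ring
  have hp1 : p1^2 ≤ N := by linarith [sq_nonneg (p1+2*p2)]
  have hp2 : p2^2 ≤ N := by linarith [sq_nonneg (p2+2*p1)]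
  have hLam : 4/3 * (Real.sqrt 13 / 4)^3 = 13 * Real.sqrt 13 / 48 := by
    have : Real.sqrt 13 ^3 = 13 * Real.sqrt 13 := by rw [pow_succ, hz]
    rw [div_pow, this]; ring
  have hsing : ∀ p, p^2 ≤ N → JJ l N p ≤ 13 * Real.sqrt 13 / 48 := by
    intro p hp
    rw [← hLam]
    apply single (p := p) (hc p) (by positivity) hl
    intro t ht
    have := rho_nonneg t
    rw [div_pow, hz]; linarith
  rcases le_or_gt N (13/16 - kap) with hcase | hcase
  · obtain ⟨y1, R1, hy1, hy1', hI1, hR1⟩ := arm (A := 13/16 - N) (p := p1) (by linarith) (by linarith) hl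
    obtain ⟨y2, R2, hy2, hy2', hI2, hR2⟩ := arm (A := 13/16 - N) (p := p2) (by linarith) (by linarith) hl
    have e : ∀ p, JJ l N p = ∫ t in (0:ℝ)..l, max (13/16 - N - rho t + 2 * t * p - t^2) 0 := by
      intro p; unfold JJ; congr 1; ext t; congr 1; ring
    rw [e, e]
    have hT : (13/16 - N) * y1 + p1 * y1^2 - y1^3/3 - R1 + ((13/16 - N) * y2 + p2 * y2^2 - y2^3/3 - R2)
        ≤ 13 * Real.sqrt 13 / 48 := by
      rcases (add_nonneg hy1 hy2).eq_or_lt with hw | hw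
      · have a1 : y1 = 0 := by linarith
        have a2 : y2 = 0 := by linarith
        subst a1; subst a2
        have : 0 ≤ R1 := by rcases hR1 with ⟨_, h⟩ | ⟨_, h⟩ <;> rw [h] <;> linarith
        have : 0 ≤ R2 := by rcases hR2 with ⟨_, h⟩ | ⟨_, h⟩ <;> rw [h] <;> linarith
        norm_num; linarith
      · have hP := corner_poly (p1 := p1) (p2 := p2) hw
        rw [← hN] at hP
        suffices hs : 13/16 * (y1+y2) - (y1+y2)^3/12 + (y1*y2)^2/(4*(y1+y2)) - R1 - R2 ≤ 13 * Real.sqrt 13 / 48 by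
          linarith
        have hq : (y1*y2)^2/(4*(y1+y2)) ≤ (y1+y2)^3/64 := by
          rw [div_le_iff₀ (by positivity)]
          have a : y1 * y2 ≤ (y1+y2)^2/4 := by nlinarith [sq_nonneg (y1-y2)]
          have := pow_le_pow_left₀ (mul_nonneg hy1 hy2) a 2
          linarith
        have hmid : 13/16 * (y1+y2) - (y1+y2)^3/12 ≤ 13 * Real.sqrt 13 / 48 := by
          have := mul_nonneg (sq_nonneg ((y1+y2) - Real.sqrt 13/2)) (by positivity : 0 ≤ (y1+y2) + Real.sqrt 13)
          have e : (y1 + y2 - √13 / 2) ^ 2 * (y1 + y2 + √13) = (y1+y2)^3 - 39/4*(y1+y2) + 13/4 * √13 := by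
            linear_combination (-3/4 * (y1+y2) + √13/4) * hz
          rw [e] at this; linarith
        rcases hR1 with ⟨g1, h1⟩ | ⟨g1, h1⟩ <;> rcases hR2 with ⟨g2, h2⟩ | ⟨g2, h2⟩ <;> rw [h1, h2]
        · have : 0 ≤ (y1+y2-2)^2*(y1+y2+4) := by positivity
          unfold kap; linarith
        · have := hmix y2 y1 hy2 g2 g1 hy1'
          rw [mul_comm y2 y1, add_comm y2 y1] at this
          linarith
        · have := hmix y1 y2 hy1 g1 g2 hy2'
          linarith
        · have : 0 ≤ 2/3*kap*y1 := by positivity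
          have : 0 ≤ 2/3*kap*y2 := by positivity
          have : 0 ≤ (y1+y2)^3 := by positivity
          linarith
    linarith
  · have hzero : ∀ p, p ≤ 0 → JJ l N p ≤ 0 := by
      intro p hp
      have e : JJ l N p = ∫ t in (0:ℝ)..l, (0:ℝ) := by
        unfold JJ
        apply intervalIntegral.integral_congr
        intro t ht
        rw [Set.uIcc_of_le hl] at ht
        apply max_eq_right
        have := rho_ge t
        have : 0 ≤ t * (-p) := mul_nonneg ht.1 (by linarith)
        have : 0 ≤ t^2 * (1 - 4 * kap) := mul_nonneg (sq_nonneg t) (by linarith)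
        linarith
      rw [e]; simp
    rcases le_or_gt p1 0 with g1 | g1
    · linarith [hzero p1 g1, hsing p2 hp2]
    rcases le_or_gt p2 0 with g2 | g2
    · linarith [hzero p2 g2, hsing p1 hp1]
    have hgen : ∀ p u, 0 ≤ u → 13/16 - (N - p^2) ≤ u^2 → JJ l N p ≤ 4/3 * u^3 := by
      intro p u hu h
      apply single (p := p) (hc p) hu hl
      intro t ht
      have := rho_nonneg t
      linarith
    rcases le_or_gt (13/16 - (N - p1^2)) 0 with e1 | e1
    · linarith [hgen p1 0 le_rfl (by linarith), hsing p2 hp2]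
    rcases le_or_gt (13/16 - (N - p2^2)) 0 with e2 | e2
    · linarith [hgen p2 0 le_rfl (by linarith), hsing p1 hp1]
    have s1 := Real.sq_sqrt e1.le
    have s2 := Real.sq_sqrt e2.le
    have t1 := Real.sqrt_nonneg (13/16 - (N - p1^2))
    have t2 := Real.sqrt_nonneg (13/16 - (N - p2^2))
    set u1 := Real.sqrt (13/16 - (N - p1^2))
    set u2 := Real.sqrt (13/16 - (N - p2^2))
    have b1 := hgen p1 u1 t1 s1.ge
    have b2 := hgen p2 u2 t2 s2.ge
    have hsum : u1^2 + u2^2 ≤ 13/16 := by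
      rw [s1, s2]
      have := mul_pos g1 g2
      linarith
    set L := Real.sqrt 13 / 4 with hL
    have hL2 : L^2 = 13/16 := by rw [hL, div_pow, hz]; norm_num
    have hL0 : 0 ≤ L := by positivity
    have c1 : u1 ≤ L := abs_le_of_sq_le_sq' (by linarith [sq_nonneg u2]) hL0 |>.2
    have c2 : u2 ≤ L := abs_le_of_sq_le_sq' (by linarith [sq_nonneg u1]) hL0 |>.2
    have : u1^3 + u2^3 ≤ L^3 := by
      have := mul_le_mul_of_nonneg_left c1 (sq_nonneg u1)
      have := mul_le_mul_of_nonneg_left c2 (sq_nonneg u2)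
      have := mul_le_mul_of_nonneg_left hsum hL0
      have e3 : L^3 = L * (13/16) := by rw [← hL2]; ring
      linarith
    linarith

lemma s3_sq : Real.sqrt 3 ^ 2 = 3 := Real.sq_sqrt (by norm_num)

/-- helper -/
def sd (a b u v t : ℝ) : E2 := pt (a + t * u) (Real.sqrt 3 * (b + t * v))

lemma pt_norm (a b : ℝ) (c : E2) : ‖pt a b - c‖^2 = (a - c 0)^2 + (b - c 1)^2 := by
  rw [EuclideanSpace.real_norm_sq_eq, Fin.sum_univ_two]
  simp [pt]

lemma sd_isom {a b u v : ℝ} (h : u^2 + 3 * v^2 = 1) : Isometry (sd a b u v) := by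
  apply Isometry.of_dist_eq
  intro x y
  rw [dist_eq_norm, Real.dist_eq]
  have : ‖sd a b u v x - sd a b u v y‖^2 = |x - y|^2 := by
    unfold sd
    rw [pt_norm, sq_abs]
    simp only [pt]
    simp
    linear_combination (x-y)^2 * h + (x-y)^2 * v^2 * s3_sq
  exact (pow_left_inj₀ (norm_nonneg _) (abs_nonneg _) two_ne_zero).1 this

lemma sd_seg (a b u v a' b' a'' b'' : ℝ) (h1 : a' = a) (h2 : b' = Real.sqrt 3 * b) (h3 : a'' = a + u)
    (h4 : b'' = Real.sqrt 3 * (b + v)) :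
    segment ℝ (pt a' b') (pt a'' b'') = sd a b u v '' Set.Icc 0 1 := by
  subst h1 h2 h3 h4
  rw [segment_eq_image']
  congr 1
  ext t i
  fin_cases i <;> simp [sd, pt] <;> ring

lemma sd_restrict {a b u v : ℝ} (h : u^2 + 3 * v^2 = 1) :
    (μH[1] : Measure E2).restrict (sd a b u v '' Set.Icc 0 1) =
      Measure.map (sd a b u v) (volume.restrict (Set.Icc 0 1)) := by
  have hi : Isometry (sd a b u v) := sd_isom h
  have he : MeasurableEmbedding (sd a b u v) := hi.isClosedEmbedding.measurableEmbedding
  have h1 := hi.map_hausdorffMeasure (d := 1) (Or.inl zero_le_one)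
  rw [hausdorffMeasure_real] at h1
  have h2 := he.restrict_map volume (sd a b u v '' Set.Icc 0 1)
  rw [Set.preimage_image_eq _ hi.injective, h1, Measure.restrict_restrict_of_subset
    (Set.image_subset_range _ _)] at h2
  exact h2

lemma sd_int {a b u v : ℝ} (h : u^2 + 3 * v^2 = 1) {g : E2 → ℝ} (hg : Continuous g) :
    ∫ x in sd a b u v '' Set.Icc 0 1, g x ∂(μH[1] : Measure E2) =
      ∫ t in (0:ℝ)..1, g (sd a b u v t) := by
  have hi : Isometry (sd a b u v) := sd_isom h
  rw [sd_restrict h, integral_map hi.continuous.aemeasurable hg.aestronglyMeasurable,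
    intervalIntegral.integral_of_le zero_le_one, integral_Icc_eq_integral_Ioc]

lemma sd_integrable {a b u v : ℝ} (h : u^2 + 3 * v^2 = 1) {g : E2 → ℝ} (hg : Continuous g) :
    Integrable g ((μH[1] : Measure E2).restrict (sd a b u v '' Set.Icc 0 1)) := by
  have hi : Isometry (sd a b u v) := sd_isom h
  rw [sd_restrict h, integrable_map_measure hg.aestronglyMeasurable hi.continuous.aemeasurable]
  exact ((hg.comp hi.continuous).continuousOn).integrableOn_compact isCompact_Icc

/-- helper -/
def side : Fin 6 → ℝ → E2 := ![sd 0 0 1 0, sd 1 0 (1/2) (1/2), sd (3/2) (1/2) (-(1/2)) (1/2),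
  sd 1 1 (-1) 0, sd 0 1 (-(1/2)) (-(1/2)), sd (-(1/2)) (1/2) (1/2) (-(1/2))]

/-- helper -/
def sg (i : Fin 6) : Set E2 := side i '' Set.Icc 0 1

lemma hexL_eq : hexL = sg 0 ∪ sg 1 ∪ sg 2 ∪ sg 3 ∪ sg 4 ∪ sg 5 := by
  unfold hexL
  rw [sd_seg 0 0 1 0 0 0 1 0, sd_seg 1 0 (1/2) (1/2), sd_seg (3/2) (1/2) (-(1/2)) (1/2),
    sd_seg 1 1 (-1) 0, sd_seg 0 1 (-(1/2)) (-(1/2)), sd_seg (-(1/2)) (1/2) (1/2) (-(1/2))]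
  · rfl
  all_goals ring

lemma disj {S : Set E2} {i : Fin 6} (h : ∀ t, 0 ≤ t → t ≤ 1 → side i t ∈ S → t = 0 ∨ t = 1) :
    AEDisjoint (μH[1] : Measure E2) S (sg i) := by
  have hsub : S ∩ sg i ⊆ {side i 0, side i 1} := by
    rintro x ⟨hx, t, ht, rfl⟩
    rcases h t ht.1 ht.2 hx with rfl | rfl <;> simp
  have := Measure.nullSingletonClass_hausdorff E2 (d := 1) zero_lt_one
  exact measure_mono_null hsub (Set.Finite.measure_zero ((Set.finite_singleton _).insert _) _)

lemma sd_eq {a b u v a' b' u' v' t t' : ℝ} (h : sd a b u v t = sd a' b' u' v' t') :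
    a + t * u = a' + t' * u' ∧ b + t * v = b' + t' * v' := by
  unfold sd pt at h
  have h0 := congrArg (fun x : E2 => x 0) h
  have h1 := congrArg (fun x : E2 => x 1) h
  simp at h0 h1
  exact ⟨h0, h1⟩

lemma side_cont (i : Fin 6) : Continuous (side i) := by
  fin_cases i <;> exact (sd_isom (by norm_num)).continuous

lemma sg_closed (i : Fin 6) : NullMeasurableSet (sg i) (μH[1] : Measure E2) :=
  (isCompact_Icc.image (side_cont i)).isClosed.measurableSet.nullMeasurableSet

lemma sg_int (i : Fin 6) {g : E2 → ℝ} (hg : Continuous g) :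
    ∫ x in sg i, g x ∂(μH[1] : Measure E2) = ∫ t in (0:ℝ)..1, g (side i t) := by
  fin_cases i <;> exact sd_int (by norm_num) hg

lemma sg_integrable (i : Fin 6) {g : E2 → ℝ} (hg : Continuous g) :
    IntegrableOn g (sg i) (μH[1] : Measure E2) := by
  fin_cases i <;> exact sd_integrable (by norm_num) hg

lemma hex_int_s5 {g : E2 → ℝ} (hg : Continuous g) :
    ∫ x, g x ∂hexP = (1/6) * ∑ i : Fin 6, ∫ t in (0:ℝ)..1, g (side i t) := by
  have d1 : AEDisjoint (μH[1] : Measure E2) (sg 0) (sg 1) := by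
    apply disj; rintro t h0 h1 ⟨t', ⟨h0', h1'⟩, h⟩
    obtain ⟨e, f⟩ := sd_eq h
    first | (left; linarith) | (right; linarith) | (exfalso; linarith)
  have d2 : AEDisjoint (μH[1] : Measure E2) (sg 0 ∪ sg 1) (sg 2) := by
    apply disj; rintro t h0 h1 (⟨t', ⟨h0', h1'⟩, h⟩ | ⟨t', ⟨h0', h1'⟩, h⟩) <;>
    obtain ⟨e, f⟩ := sd_eq h <;>
    first | (left; linarith) | (right; linarith) | (exfalso; linarith)
  have d3 : AEDisjoint (μH[1] : Measure E2) (sg 0 ∪ sg 1 ∪ sg 2) (sg 3) := by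
    apply disj; rintro t h0 h1 ((⟨t', ⟨h0', h1'⟩, h⟩ | ⟨t', ⟨h0', h1'⟩, h⟩) | ⟨t', ⟨h0', h1'⟩, h⟩) <;>
    obtain ⟨e, f⟩ := sd_eq h <;>
    first | (left; linarith) | (right; linarith) | (exfalso; linarith)
  have d4 : AEDisjoint (μH[1] : Measure E2) (sg 0 ∪ sg 1 ∪ sg 2 ∪ sg 3) (sg 4) := by
    apply disj; rintro t h0 h1 (((⟨t', ⟨h0', h1'⟩, h⟩ | ⟨t', ⟨h0', h1'⟩, h⟩) | ⟨t', ⟨h0', h1'⟩, h⟩) | ⟨t', ⟨h0', h1'⟩, h⟩) <;>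
    obtain ⟨e, f⟩ := sd_eq h <;>
    first | (left; linarith) | (right; linarith) | (exfalso; linarith)
  have d5 : AEDisjoint (μH[1] : Measure E2) (sg 0 ∪ sg 1 ∪ sg 2 ∪ sg 3 ∪ sg 4) (sg 5) := by
    apply disj; rintro t h0 h1 ((((⟨t', ⟨h0', h1'⟩, h⟩ | ⟨t', ⟨h0', h1'⟩, h⟩) | ⟨t', ⟨h0', h1'⟩, h⟩) | ⟨t', ⟨h0', h1'⟩, h⟩) | ⟨t', ⟨h0', h1'⟩, h⟩) <;>
    obtain ⟨e, f⟩ := sd_eq h <;>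
    first | (left; linarith) | (right; linarith) | (exfalso; linarith)
  have i0 := sg_integrable 0 hg
  have i1 := sg_integrable 1 hg
  have i2 := sg_integrable 2 hg
  have i3 := sg_integrable 3 hg
  have i4 := sg_integrable 4 hg
  have i5 := sg_integrable 5 hg
  unfold hexP
  rw [hexL_eq, integral_smul_measure,
    setIntegral_union₀ d5 (sg_closed 5) ((((i0.union i1).union i2).union i3).union i4) i5,
    setIntegral_union₀ d4 (sg_closed 4) (((i0.union i1).union i2).union i3) i4,
    setIntegral_union₀ d3 (sg_closed 3) ((i0.union i1).union i2) i3,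
    setIntegral_union₀ d2 (sg_closed 2) (i0.union i1) i2,
    setIntegral_union₀ d1 (sg_closed 1) i0 i1]
  simp only [sg_int _ hg, Fin.sum_univ_six]
  simp


/-- helper -/
def hh (r t : ℝ) : ℝ := r^2 * (13/16 - rho (t/r) - rho ((1-t)/r))

lemma hh_cont (r : ℝ) : Continuous (hh r) := by
  have := rho_cont; unfold hh; fun_prop

lemma hh_symm (r t : ℝ) : hh r (1 - t) = hh r t := by
  unfold hh; rw [sub_sub_cancel]; ring

lemma hh_le {r t : ℝ} (h0 : 0 < r) (h1 : r ≤ 1/2) : hh r t ≤ 13/64 := by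
  unfold hh
  have a := rho_nonneg (t/r)
  have b := rho_nonneg ((1-t)/r)
  have : r^2 * (13/16 - rho (t/r) - rho ((1-t)/r)) ≤ r^2 * (13/16) := by
    apply mul_le_mul_of_nonneg_left _ (sq_nonneg r); linarith
  nlinarith

lemma hh_int {r : ℝ} (h0 : 0 < r) (h1 : r ≤ 1/2) :
    ∫ t in (0:ℝ)..1, hh r t = 13/16 * r^2 - 2/3 * kap * r^3 := by
  have e0 : ∫ t in (0:ℝ)..1, rho (t/r) = r * (kap / 3) := by
    rw [intervalIntegral.integral_comp_div rho h0.ne', zero_div, int_rho_big]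
    · rfl
    · rw [le_div_iff₀ h0]; linarith
  have e1 : ∫ t in (0:ℝ)..1, rho ((1-t)/r) = r * (kap / 3) := by
    have := intervalIntegral.integral_comp_sub_left (a := 0) (b := 1) (fun t => rho (t/r)) 1
    rw [this]; simpa using e0
  have c0 : Continuous fun t => rho (t/r) := by have := rho_cont; fun_prop
  have c1 : Continuous fun t => rho ((1-t)/r) := by have := rho_cont; fun_prop
  unfold hh
  rw [intervalIntegral.integral_const_mul, intervalIntegral.integral_sub
    (Continuous.intervalIntegrable (by fun_prop) _ _) (c1.intervalIntegrable _ _),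
    intervalIntegral.integral_sub (Continuous.intervalIntegrable (by fun_prop) _ _)
    (c0.intervalIntegrable _ _), e0, e1]
  simp; ring

/-- helper -/
def ben (r : ℝ) (f : ℝ → E2) (c : E2) : ℝ := ∫ t in (0:ℝ)..1, max (hh r t - ‖f t - c‖^2) 0

lemma ben_nonneg (r : ℝ) (f : ℝ → E2) (c : E2) : 0 ≤ ben r f c :=
  intervalIntegral.integral_nonneg zero_le_one fun _ _ => le_max_right _ _

lemma sd_cont (a b u v : ℝ) : Continuous (sd a b u v) := by
  unfold sd pt; fun_prop

lemma ben_rev (r a b u v : ℝ) (c : E2) :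
    ben r (sd a b u v) c = ben r (sd (a+u) (b+v) (-u) (-v)) c := by
  unfold ben
  have := intervalIntegral.integral_comp_sub_left (a := 0) (b := 1)
    (fun t => max (hh r t - ‖sd a b u v t - c‖^2) 0) 1
  simp only [sub_self, sub_zero] at this
  rw [← this]
  congr 1; ext t
  rw [hh_symm]
  congr 4
  unfold sd; congr 1 <;> ring_nf

lemma ben_le {r a b u v : ℝ} (h0 : 0 < r) (h : u^2 + 3 * v^2 = 1) (c : E2) :
    ben r (sd a b u v) c ≤ r^3 * JJ (1/r) (((c 0 - a)^2 + (c 1 - √3 * b)^2)/r^2)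
      ((u * (c 0 - a) + √3 * v * (c 1 - √3 * b))/r) := by
  unfold ben JJ
  set X := c 0 - a
  set Y := c 1 - √3 * b
  have e := intervalIntegral.integral_comp_div (a := 0) (b := 1) (fun t => max (13/16 - rho t - (X^2+Y^2)/r^2 + 2 * t * ((u * X + √3 * v * Y)/r) - t^2) 0) h0.ne'
  rw [zero_div, smul_eq_mul] at e
  have e2 : r^3 * (∫ t in (0:ℝ)..1/r, max (13/16 - rho t - (X^2+Y^2)/r^2 + 2 * t * ((u * X + √3 * v * Y)/r) - t^2) 0)
    = ∫ t in (0:ℝ)..1, r^2 * max (13/16 - rho (t/r) - (X^2+Y^2)/r^2 + 2 * (t/r) * ((u * X + √3 * v * Y)/r) - (t/r)^2) 0 := by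
    rw [intervalIntegral.integral_const_mul, e]; ring
  rw [e2]
  have hc := rho_cont
  have hc2 := hh_cont r
  have hc3 := sd_cont a b u v
  apply intervalIntegral.integral_mono_on zero_le_one
  · apply Continuous.intervalIntegrable; fun_prop
  · apply Continuous.intervalIntegrable; fun_prop
  · intro t ht
    apply max_le
    · refine le_trans ?_ (mul_le_mul_of_nonneg_left (le_max_left _ _) (sq_nonneg r))
      have hR := mul_nonneg (sq_nonneg r) (rho_nonneg ((1-t)/r))
      have e3 : ‖sd a b u v t - c‖^2 = X^2 + Y^2 - 2 * t * (u * X + √3 * v * Y) + t^2 := by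
        unfold sd
        rw [pt_norm]
        simp only [X, Y]
        linear_combination t^2 * h + t^2 * v^2 * s3_sq
      have e4 : r^2 * (13/16 - rho (t/r) - (X^2+Y^2)/r^2 + 2 * (t/r) * ((u * X + √3 * v * Y)/r) - (t/r)^2)
          = r^2 * (13/16 - rho (t/r)) - (X^2 + Y^2 - 2 * t * (u * X + √3 * v * Y) + t^2) := by
        field_simp; ring
      rw [e3, e4]
      unfold hh
      linarith
    · exact mul_nonneg (sq_nonneg r) (le_max_right _ _)

lemma corner_ben {r a b u v u' v' : ℝ} (h0 : 0 < r) (h : u^2 + 3 * v^2 = 1) (h' : u'^2 + 3 * v'^2 = 1)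
    (k1 : u^2 + u'^2 + u * u' = 3/4) (k2 : v^2 + v'^2 + v * v' = 1/4)
    (k3 : 2 * u * v + 2 * u' * v' + u * v' + u' * v = 0) (c : E2) :
    ben r (sd a b u v) c + ben r (sd a b u' v') c ≤ r^3 * (13 * √13 / 48) := by
  have a1 := ben_le (a := a) (b := b) h0 h c
  have a2 := ben_le (a := a) (b := b) h0 h' c
  set X := c 0 - a
  set Y := c 1 - √3 * b
  have := corner_main (N := (X^2 + Y^2)/r^2) (p1 := (u * X + √3 * v * Y)/r)
    (p2 := (u' * X + √3 * v' * Y)/r) (l := 1/r) (by positivity) (by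
      field_simp
      linear_combination (-4/3*X^2)*k1*3 + (-4 * Y^2)*k2*3 - 4/3*√3*X*Y*k3*3 - 4/3 * 3 * Y^2 * (v^2 + v'^2 + v * v') * s3_sq)
  have := mul_le_mul_of_nonneg_left this (by positivity : 0 ≤ r^3)
  linarith

lemma corner_ben2 {r a b u v a' b' u' v' : ℝ} (h0 : 0 < r) (ha : a' = a + u) (hb : b' = b + v)
    (h : u^2 + 3 * v^2 = 1) (h' : u'^2 + 3 * v'^2 = 1)
    (k1 : u^2 + u'^2 - u * u' = 3/4) (k2 : v^2 + v'^2 - v * v' = 1/4)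
    (k3 : 2 * u * v + 2 * u' * v' - u * v' - u' * v = 0) (c : E2) :
    ben r (sd a b u v) c + ben r (sd a' b' u' v') c ≤ r^3 * (13 * √13 / 48) := by
  rw [ben_rev, ha, hb]
  apply corner_ben h0 <;> linarith

lemma adj (i : Fin 6) {r : ℝ} (h0 : 0 < r) (c : E2) :
    ben r (side i) c + ben r (side (i+1)) c ≤ r^3 * (13 * √13 / 48) := by
  fin_cases i <;> exact corner_ben2 h0 (by norm_num) (by norm_num) (by norm_num) (by norm_num)
    (by norm_num) (by norm_num) (by norm_num) c

lemma near {i : Fin 6} {r : ℝ} (h0 : 0 < r) (h1 : r ≤ 1/2) {c : E2} (h : ben r (side i) c ≠ 0) :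
    ∃ t, 0 ≤ t ∧ t ≤ 1 ∧ ‖side i t - c‖^2 < 13/64 := by
  by_contra hcon
  push Not at hcon
  apply h
  have : ben r (side i) c = ∫ t in (0:ℝ)..1, (0:ℝ) := by
    unfold ben
    apply intervalIntegral.integral_congr
    intro t ht
    rw [Set.uIcc_of_le zero_le_one] at ht
    apply max_eq_right
    have := hcon t ht.1 ht.2
    have := hh_le (t := t) h0 h1
    linarith
  rw [this]; simp

lemma nonadj {a b u v a' b' u' v' : ℝ} {c : E2}
    (hd : ∀ t t' : ℝ, 0 ≤ t → t ≤ 1 → 0 ≤ t' → t' ≤ 1 →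
      1 ≤ (a + t * u - (a' + t' * u'))^2 + 3 * (b + t * v - (b' + t' * v'))^2)
    {t t' : ℝ} (h0 : 0 ≤ t) (h1 : t ≤ 1) (h0' : 0 ≤ t') (h1' : t' ≤ 1)
    (h : ‖sd a b u v t - c‖^2 < 13/64) (h' : ‖sd a' b' u' v' t' - c‖^2 < 13/64) : False := by
  have := hd t t' h0 h1 h0' h1'
  unfold sd at h h'
  rw [pt_norm] at h h'
  have e : 3 * (b + t * v - (b' + t' * v'))^2 =
      ((√3 * (b + t * v) - c 1) - (√3 * (b' + t' * v') - c 1))^2 := by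
    linear_combination -(b + t * v - (b' + t' * v'))^2 * s3_sq
  rw [e] at this
  set x := √3 * (b + t * v) - c 1
  set y := √3 * (b' + t' * v') - c 1
  set z := a + t * u
  set w := a' + t' * u'
  nlinarith [sq_nonneg (x + y), sq_nonneg (z - c 0 + (w - c 0))]

lemma comb {b : Fin 6 → ℝ} {M : ℝ} (h0 : ∀ i, 0 ≤ b i) (ha : ∀ i, b i + b (i+1) ≤ M)
    (h02 : b 0 = 0 ∨ b 2 = 0) (h03 : b 0 = 0 ∨ b 3 = 0) (h04 : b 0 = 0 ∨ b 4 = 0)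
    (h13 : b 1 = 0 ∨ b 3 = 0) (h14 : b 1 = 0 ∨ b 4 = 0) (h15 : b 1 = 0 ∨ b 5 = 0)
    (h24 : b 2 = 0 ∨ b 4 = 0) (h25 : b 2 = 0 ∨ b 5 = 0) (h35 : b 3 = 0 ∨ b 5 = 0) :
    ∑ i, b i ≤ M := by
  rw [Fin.sum_univ_six]
  have a0 : b 0 + b 1 ≤ M := ha 0
  have a1 : b 1 + b 2 ≤ M := ha 1
  have a2 : b 2 + b 3 ≤ M := ha 2
  have a3 : b 3 + b 4 ≤ M := ha 3
  have a4 : b 4 + b 5 ≤ M := ha 4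
  have a5 : b 5 + b 0 ≤ M := ha 5
  have p0 := h0 0
  have p1 := h0 1
  have p2 := h0 2
  have p3 := h0 3
  have p4 := h0 4
  have p5 := h0 5
  by_cases z0 : b 0 = 0
  · by_cases z1 : b 1 = 0
    · by_cases z2 : b 2 = 0
      · rcases h35 with h | h <;> linarith
      · have := h24.resolve_left z2; have := h25.resolve_left z2; linarith
    · have := h13.resolve_left z1; have := h14.resolve_left z1; have := h15.resolve_left z1; linarith
  · have := h02.resolve_left z0; have := h03.resolve_left z0; have := h04.resolve_left z0
    rcases h15 with h | h <;> linarith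

lemma ben_sum {r : ℝ} (h0 : 0 < r) (h1 : r ≤ 1/2) (c : E2) :
    ∑ i, ben r (side i) c ≤ r^3 * (13 * √13 / 48) := by
  apply comb (b := fun i => ben r (side i) c) (fun i => ben_nonneg _ _ _) (fun i => adj i h0 c)
  all_goals
    by_contra hcon
    push Not at hcon
    obtain ⟨t, ht0, ht1, ht⟩ := near h0 h1 hcon.1
    obtain ⟨t', ht0', ht1', ht'⟩ := near h0 h1 hcon.2
    refine nonadj ?_ ht0 ht1 ht0' ht1' ht ht'
    intro t t' a b c d
    nlinarith [mul_nonneg a c, mul_nonneg (sub_nonneg.2 b) c, mul_nonneg a (sub_nonneg.2 d), mul_nonneg (sub_nonneg.2 b) (sub_nonneg.2 d), sq_nonneg (t - t'), sq_nonneg (t+t'-1), sq_nonneg t, sq_nonneg t']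

/-- helper -/
def DD (α : Set E2) (x : E2) : ℝ := sInf ((fun a => ‖x - a‖ ^ 2) '' α)

lemma DD_le {α : Set E2} {x a : E2} (h : a ∈ α) : DD α x ≤ ‖x - a‖^2 := by
  apply csInf_le
  · refine ⟨0, ?_⟩
    rintro _ ⟨b, _, rfl⟩
    positivity
  · exact ⟨a, h, rfl⟩

lemma DD_attained {α : Set E2} (hf : α.Finite) (hn : α.Nonempty) (x : E2) :
    ∃ a ∈ α, DD α x = ‖x - a‖^2 := by
  obtain ⟨a, ha, h⟩ := (hn.image (fun a => ‖x - a‖ ^ 2)).csInf_mem (hf.image _)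
  exact ⟨a, ha, h.symm⟩

lemma DD_cont {α : Set E2} (hf : α.Finite) (hn : α.Nonempty) : Continuous (DD α) := by
  lift α to Finset E2 using hf
  have hn' : α.Nonempty := by simpa using hn
  have : DD (α : Set E2) = fun x => α.inf' hn' (fun a => ‖x - a‖^2) := by
    ext x
    rw [Finset.inf'_eq_csInf_image]; rfl
  rw [this]
  apply Continuous.finset_inf'_apply
  intro a _; fun_prop

lemma lower_s5 {α : Set E2} (hf : α.Finite) (hn : α.Nonempty) {n : ℕ} (hc : α.ncard ≤ n) {r : ℝ}
    (h0 : 0 < r) (h1 : r ≤ 1/2) :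
    13/16 * r^2 - 2/3 * kap * r^3 - n * (r^3 * (13 * √13 / 48)) / 6 ≤ ∫ x, DD α x ∂hexP := by
  have hD := DD_cont hf hn
  rw [hex_int_s5 hD]
  lift α to Finset E2 using hf
  rw [Set.ncard_coe_finset] at hc
  have hs : ∀ i : Fin 6, (13/16 * r^2 - 2/3 * kap * r^3) - ∑ a ∈ α, ben r (side i) a ≤
      ∫ t in (0:ℝ)..1, DD α (side i t) := by
    intro i
    have c1 := hh_cont r
    have c2 := side_cont i
    have ci : ∀ a ∈ α, IntervalIntegrable (fun t => max (hh r t - ‖side i t - a‖^2) 0) volume 0 1 := by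
      intro a _
      apply Continuous.intervalIntegrable; fun_prop
    rw [← hh_int h0 h1]
    unfold ben
    rw [← intervalIntegral.integral_finsetSum ci, ← intervalIntegral.integral_sub
      (c1.intervalIntegrable _ _) (Continuous.intervalIntegrable (by fun_prop) _ _)]
    apply intervalIntegral.integral_mono_on zero_le_one
    · apply Continuous.intervalIntegrable; fun_prop
    · exact (hD.comp c2).intervalIntegrable _ _
    · intro t _
      obtain ⟨a, ha, he⟩ := DD_attained α.finite_toSet hn (side i t)
      rw [he]
      have := Finset.single_le_sum (f := fun a => max (hh r t - ‖side i t - a‖^2) 0)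
        (fun a _ => le_max_right _ _) (Finset.mem_coe.1 ha)
      have := le_max_left (hh r t - ‖side i t - a‖^2) 0
      linarith
  have hsum := Finset.sum_le_sum (fun i (_ : i ∈ Finset.univ) => hs i)
  rw [Finset.sum_sub_distrib, Finset.sum_comm] at hsum
  have hb : ∑ a ∈ α, ∑ i, ben r (side i) a ≤ n * (r^3 * (13 * √13 / 48)) := by
    calc ∑ a ∈ α, ∑ i, ben r (side i) a ≤ ∑ a ∈ α, (r^3 * (13 * √13 / 48)) :=
          Finset.sum_le_sum fun a _ => ben_sum h0 h1 a
      _ = α.card * (r^3 * (13 * √13 / 48)) := by rw [Finset.sum_const, nsmul_eq_mul]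
      _ ≤ _ := by
        apply mul_le_mul_of_nonneg_right _ (by positivity)
        exact_mod_cast hc
  simp only [Finset.sum_const, Finset.card_univ, Fintype.card_fin, nsmul_eq_mul] at hsum
  push_cast at hsum
  linarith

lemma upper {D : ℝ → ℝ} (hD : Continuous D) {r s : ℝ} {m : ℕ} (h0 : 0 < r) (hs : 0 ≤ s)
    (hrs : 2 * r + m * s = 1) (hsr : s^2 = 13/4 * r^2)
    (d1 : ∀ t, D t ≤ t^2 - t * r/4 + r^2/16)
    (d2 : ∀ t, D t ≤ (1-t)^2 - (1-t) * r/4 + r^2/16)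
    (d3 : ∀ j : ℕ, j < m → ∀ t, D t ≤ (t - (r + (j + 1/2) * s))^2) :
    ∫ t in (0:ℝ)..1, D t ≤ 13/48 * r^2 := by
  have base : ∀ F : ℝ → ℝ, Continuous F → (∀ t, F t ≤ t^2 - t * r/4 + r^2/16) →
      ∫ t in (0:ℝ)..r, F t ≤ 13/48 * r^3 := by
    intro F hF h
    have : ∫ t in (0:ℝ)..r, F t ≤ ∫ t in (0:ℝ)..r, (r^2/16 + (-r/4) * t + 1 * t^2) := by
      apply intervalIntegral.integral_mono_on h0.le (hF.intervalIntegrable _ _)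
      · apply Continuous.intervalIntegrable; fun_prop
      · intro t _; linarith [h t]
    rw [int_quad] at this
    linarith
  have i1 := base D hD d1
  have i2 := base (fun t => D (1-t)) (by fun_prop) (fun t => by have := d2 (1-t); simpa using this)
  have e2 := intervalIntegral.integral_comp_sub_left (a := 0) (b := r) D 1
  rw [e2, sub_zero] at i2
  have i3 : ∀ j < m, ∫ t in (r + j * s)..(r + (j+1:ℕ) * s), D t ≤ s^3/12 := by
    intro j hj
    have : ∫ t in (r + j * s)..(r + (j+1:ℕ) * s), D t ≤
        ∫ t in (r + j * s)..(r + (j+1:ℕ) * s), (t - (r + (j + 1/2) * s))^2 := by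
      apply intervalIntegral.integral_mono_on
      · push_cast; linarith
      · exact hD.intervalIntegrable _ _
      · apply Continuous.intervalIntegrable; fun_prop
      · intro t _; exact d3 j hj t
    refine this.trans (le_of_eq ?_)
    rw [intervalIntegral.integral_comp_sub_right (fun t => t^2), integral_pow]
    push_cast; ring
  have hsum := intervalIntegral.sum_integral_adjacent_intervals (f := D) (μ := volume)
    (a := fun j : ℕ => r + j * s) (n := m) (fun _ _ => hD.intervalIntegrable _ _)
  have i4 : ∑ j ∈ Finset.range m, ∫ t in (r + j * s)..(r + (j+1:ℕ) * s), D t ≤ m * (s^3/12) := by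
    refine (Finset.sum_le_sum (fun j hj => i3 j (Finset.mem_range.1 hj))).trans ?_
    simp
  have e4 : r + m * s = 1 - r := by linarith
  simp only [Nat.cast_zero, zero_mul, add_zero] at hsum
  rw [hsum, e4] at i4
  rw [← intervalIntegral.integral_add_adjacent_intervals (b := 1 - r)
    (hD.intervalIntegrable _ _) (hD.intervalIntegrable _ _),
    ← intervalIntegral.integral_add_adjacent_intervals (a := 0) (b := r)
    (hD.intervalIntegrable _ _) (hD.intervalIntegrable _ _)]
  have e5 : (m:ℝ) * (s^3/12) = (1 - 2 * r) * (13/48 * r^2) := by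
    have : (m:ℝ) * s = 1 - 2 * r := by linarith
    calc (m:ℝ) * (s^3/12) = (m * s) * (s^2/12) := by ring
      _ = _ := by rw [this, hsr]; ring
  linarith

/-- helper -/
def cp (r : ℝ) : Fin 6 → E2 := ![pt (r/8) (Real.sqrt 3 * r / 8), pt (1 - r/8) (Real.sqrt 3 * r / 8),
          pt ((6 - r)/4) (Real.sqrt 3 / 2), pt (1 - r/8) (-(Real.sqrt 3 * (r - 8)) / 8),
          pt (r/8) (-(Real.sqrt 3 * (r - 8)) / 8), pt ((r - 2)/4) (Real.sqrt 3 / 2)]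

lemma sd_pt_norm (a b u v t x y : ℝ) : ‖sd a b u v t - pt x (√3 * y)‖^2 =
    (a + t * u - x)^2 + 3 * (b + t * v - y)^2 := by
  unfold sd
  rw [pt_norm]
  simp only [pt]
  simp
  linear_combination (b + t * v - y)^2 * s3_sq

lemma cp1 (i : Fin 6) (r t : ℝ) : ‖side i t - cp r i‖^2 = t^2 - t * r/4 + r^2/16 := by
  have e1 : √3 * r / 8 = √3 * (r/8) := by ring
  have e2 : √3 / 2 = √3 * (1/2) := by ring
  have e3 : -(√3 * (r - 8)) / 8 = √3 * (1 - r/8) := by ring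
  unfold cp side
  rw [e1, e2, e3]
  fin_cases i <;> refine (sd_pt_norm _ _ _ _ _ _ _).trans ?_ <;> ring

lemma cp2 (i : Fin 6) (r t : ℝ) : ‖side i t - cp r (i+1)‖^2 = (1-t)^2 - (1-t) * r/4 + r^2/16 := by
  have e1 : √3 * r / 8 = √3 * (r/8) := by ring
  have e2 : √3 / 2 = √3 * (1/2) := by ring
  have e3 : -(√3 * (r - 8)) / 8 = √3 * (1 - r/8) := by ring
  unfold cp side
  rw [e1, e2, e3]
  fin_cases i <;> refine (sd_pt_norm _ _ _ _ _ _ _).trans ?_ <;> ring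

lemma rot_side (i : Fin 6) (t : ℝ) : rotHex ((i : ℕ) * π / 3) (pt t 0) = side i t := by
  have c1 : cos (1 * π / 3) = 1/2 := by rw [one_mul, cos_pi_div_three]
  have s1 : sin (1 * π / 3) = √3/2 := by rw [one_mul, sin_pi_div_three]
  have c2 : cos (2 * π / 3) = -(1/2) := by
    rw [show 2 * π / 3 = π - π/3 by ring, cos_pi_sub, cos_pi_div_three]
  have s2 : sin (2 * π / 3) = √3/2 := by
    rw [show 2 * π / 3 = π - π/3 by ring, sin_pi_sub, sin_pi_div_three]
  have c3 : cos (3 * π / 3) = -1 := by rw [show 3 * π / 3 = π by ring, cos_pi]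
  have s3 : sin (3 * π / 3) = 0 := by rw [show 3 * π / 3 = π by ring, sin_pi]
  have c4 : cos (4 * π / 3) = -(1/2) := by
    rw [show 4 * π / 3 = π/3 + π by ring, cos_add_pi, cos_pi_div_three]
  have s4 : sin (4 * π / 3) = -(√3/2) := by
    rw [show 4 * π / 3 = π/3 + π by ring, sin_add_pi, sin_pi_div_three]
  have c5 : cos (5 * π / 3) = 1/2 := by
    rw [show 5 * π / 3 = 2 * π - π/3 by ring, cos_two_pi_sub, cos_pi_div_three]
  have s5 : sin (5 * π / 3) = -(√3/2) := by
    rw [show 5 * π / 3 = 2 * π - π/3 by ring, sin_two_pi_sub, sin_pi_div_three]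
  have key : ∀ (θ C S a b u v : ℝ), cos θ = C → sin θ = √3 * S →
      a + t * u = 1/2 + (t - 1/2) * C + 3/2 * S → b + t * v = 1/2 + (t - 1/2) * S - 1/2 * C →
      rotHex θ (pt t 0) = sd a b u v t := by
    intro θ C S a b u v hC hS h1 h2
    unfold rotHex sd
    rw [h1, h2, hC, hS]
    simp only [pt]
    simp
    constructor
    · linear_combination (S/2) * s3_sq
    · ring
  fin_cases i
  · exact key _ 1 0 _ _ _ _ (by simp) (by simp) (by ring) (by ring)
  · exact key _ (1/2) (1/2) _ _ _ _ (by simpa using c1) (by simp [sin_pi_div_three]; ring) (by ring) (by ring)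
  · exact key _ (-(1/2)) (1/2) _ _ _ _ (by simpa using c2) (by push_cast; rw [s2]; ring) (by ring) (by ring)
  · exact key _ (-1) 0 _ _ _ _ (by simpa using c3) (by push_cast; rw [s3]; ring) (by ring) (by ring)
  · exact key _ (-(1/2)) (-(1/2)) _ _ _ _ (by simpa using c4) (by push_cast; rw [s4]; ring) (by ring) (by ring)
  · exact key _ (1/2) (-(1/2)) _ _ _ _ (by simpa using c5) (by push_cast; rw [s5]; ring) (by ring) (by ring)

lemma gam_eq (k : ℕ) (r : ℝ) : gam k r = (fun j : ℕ =>
    pt (r + (2 * (j : ℝ) - 1) / (2 * ((k : ℝ) - 1)) * (1 - 2 * r)) 0) '' (Finset.Icc 1 (k-1) : Finset ℕ) := by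
  ext p
  simp only [gam, Set.mem_setOf_eq, Set.mem_image, Finset.coe_Icc, Set.mem_Icc]
  constructor
  · rintro ⟨j, h1, h2, h3⟩; exact ⟨j, ⟨h1, h2⟩, h3.symm⟩
  · rintro ⟨j, ⟨h1, h2⟩, h3⟩; exact ⟨j, h1, h2, h3.symm⟩

lemma gam_fin (k : ℕ) (r : ℝ) : (gam k r).Finite := by
  rw [gam_eq]; exact (Finset.finite_toSet _).image _

lemma gam_card (k : ℕ) (r : ℝ) : (gam k r).ncard ≤ k - 1 := by
  rw [gam_eq]
  refine (Set.ncard_image_le (Finset.finite_toSet _)).trans ?_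
  rw [Set.ncard_coe_finset]; simp

/-- helper -/
def alp (k : ℕ) (r : ℝ) : Set E2 :=
  (({pt (r/8) (Real.sqrt 3 * r / 8), pt (1 - r/8) (Real.sqrt 3 * r / 8),
          pt ((6 - r)/4) (Real.sqrt 3 / 2), pt (1 - r/8) (-(Real.sqrt 3 * (r - 8)) / 8),
          pt (r/8) (-(Real.sqrt 3 * (r - 8)) / 8), pt ((r - 2)/4) (Real.sqrt 3 / 2)} : Set E2)
        ∪ gam k r ∪ ⋃ i ∈ Finset.Icc (1 : ℕ) 5, rotHex ((i : ℝ) * Real.pi / 3) '' gam k r)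

lemma alp_fin (k : ℕ) (r : ℝ) : (alp k r).Finite := by
  unfold alp
  refine ((Set.toFinite _).union (gam_fin k r)).union ?_
  exact Set.Finite.biUnion (Finset.finite_toSet _) fun i _ => (gam_fin k r).image _

lemma alp_card {k : ℕ} (hk : 1 ≤ k) (r : ℝ) : (alp k r).ncard ≤ 6 * k := by
  unfold alp
  have h5 : (⋃ i ∈ Finset.Icc (1 : ℕ) 5, rotHex ((i : ℝ) * Real.pi / 3) '' gam k r).ncard ≤ 5 * (k-1) := by
    refine (Finset.set_ncard_biUnion_le _ _).trans ?_
    refine (Finset.sum_le_sum (fun i _ => (Set.ncard_image_le (gam_fin k r)).trans (gam_card k r))).trans ?_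
    simp
  have h6 : ∀ a b c d e f : E2, ({a, b, c, d, e, f} : Set E2).ncard ≤ 6 := by
    intro a b c d e f
    refine (Set.ncard_insert_le _ _).trans (Nat.succ_le_succ ?_)
    refine (Set.ncard_insert_le _ _).trans (Nat.succ_le_succ ?_)
    refine (Set.ncard_insert_le _ _).trans (Nat.succ_le_succ ?_)
    refine (Set.ncard_insert_le _ _).trans (Nat.succ_le_succ ?_)
    refine (Set.ncard_insert_le _ _).trans (Nat.succ_le_succ ?_)
    simp
  refine (Set.ncard_union_le _ _).trans ?_
  have := Set.ncard_union_le ({pt (r/8) (Real.sqrt 3 * r / 8), pt (1 - r/8) (Real.sqrt 3 * r / 8),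
          pt ((6 - r)/4) (Real.sqrt 3 / 2), pt (1 - r/8) (-(Real.sqrt 3 * (r - 8)) / 8),
          pt (r/8) (-(Real.sqrt 3 * (r - 8)) / 8), pt ((r - 2)/4) (Real.sqrt 3 / 2)} : Set E2) (gam k r)
  have h7 := h6 (pt (r/8) (Real.sqrt 3 * r / 8)) (pt (1 - r/8) (Real.sqrt 3 * r / 8))
          (pt ((6 - r)/4) (Real.sqrt 3 / 2)) (pt (1 - r/8) (-(Real.sqrt 3 * (r - 8)) / 8))
          (pt (r/8) (-(Real.sqrt 3 * (r - 8)) / 8)) (pt ((r - 2)/4) (Real.sqrt 3 / 2))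
  have h8 := gam_card k r
  omega

lemma cp_mem (k : ℕ) (r : ℝ) (i : Fin 6) : cp r i ∈ alp k r := by
  unfold alp
  left; left
  fin_cases i <;> simp [cp]

lemma side_mem {k : ℕ} {r : ℝ} {j : ℕ} (h1 : 1 ≤ j) (h2 : j ≤ k - 1) (i : Fin 6) :
    side i (r + (2 * (j : ℝ) - 1) / (2 * ((k : ℝ) - 1)) * (1 - 2 * r)) ∈ alp k r := by
  have hg : pt (r + (2 * (j : ℝ) - 1) / (2 * ((k : ℝ) - 1)) * (1 - 2 * r)) 0 ∈ gam k r := ⟨j, h1, h2, rfl⟩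
  unfold alp
  by_cases hi : i = 0
  · left; right
    subst hi
    convert hg using 1
    simp [side, sd]
  · right
    rw [← rot_side]
    refine Set.mem_biUnion (x := (i : ℕ)) ?_ (Set.mem_image_of_mem _ hg)
    simp only [Finset.coe_Icc, Set.mem_Icc]
    have : (i : ℕ) ≠ 0 := fun h => hi (Fin.ext h)
    omega

lemma side_dist (i : Fin 6) (t t' : ℝ) : ‖side i t - side i t'‖^2 = (t - t')^2 := by
  have : Isometry (side i) := by fin_cases i <;> exact sd_isom (by norm_num)
  rw [← dist_eq_norm, this.dist_eq, Real.dist_eq, sq_abs]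

lemma main_aux (k : ℕ) (hk : 1 ≤ k) (r : ℝ)
    (hr : r = 2 * (Real.sqrt 13 * ((k : ℝ) - 1) - 4) / (13 * ((k : ℝ) - 1) ^ 2 - 16)) :
    IsOptimalSet hexP (6 * k) (alp k r) ∧
    quantErr hexP (6 * k) =
      13 * (13 * ((k : ℝ) - 1) ^ 2 - 8 * Real.sqrt 13 * ((k : ℝ) - 1) + 16) /
        (12 * (16 - 13 * ((k : ℝ) - 1) ^ 2) ^ 2) := by
  obtain ⟨m, rfl⟩ : ∃ m, k = m + 1 := ⟨k - 1, by omega⟩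
  have hm : ((m + 1 : ℕ) : ℝ) - 1 = m := by push_cast; ring
  have hz := z_sq
  have hz0 : 0 < √13 := by positivity
  have hpos : 0 < √13 * m + 4 := by positivity
  have hne : √13 * m - 4 ≠ 0 := by
    intro h
    have h2 : (13 : ℝ) * m^2 = 16 := by
      have : √13 * m = 4 := by linarith
      have := congrArg (· ^ 2) this
      simp only [mul_pow, hz] at this
      linarith
    have h3 : 13 * m^2 = 16 := by exact_mod_cast h2
    omega
  have hfac : 13 * (m:ℝ)^2 - 16 = (√13 * m - 4) * (√13 * m + 4) := by
    linear_combination (-(m:ℝ)^2) * hz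
  have hr' : r = 2 / (√13 * m + 4) := by
    rw [hr, hm, hfac]
    field_simp
  have hV : 13 * (13 * (((m+1:ℕ) : ℝ) - 1) ^ 2 - 8 * Real.sqrt 13 * (((m+1:ℕ) : ℝ) - 1) + 16) /
        (12 * (16 - 13 * (((m+1:ℕ) : ℝ) - 1) ^ 2) ^ 2) = 13/48 * r^2 := by
    rw [hm, hr']
    have e1 : 13 * (m:ℝ)^2 - 8 * √13 * m + 16 = (√13 * m - 4)^2 := by
      linear_combination (-(m:ℝ)^2) * hz
    have e2 : (16 - 13 * (m:ℝ)^2)^2 = ((√13 * m - 4) * (√13 * m + 4))^2 := by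
      rw [← hfac]; ring
    rw [e1, e2]
    field_simp
    norm_num
  have h0 : 0 < r := by rw [hr']; positivity
  have h1 : r ≤ 1/2 := by
    rw [hr', div_le_iff₀ hpos]
    have : 0 ≤ √13 * m := by positivity
    linarith
  have hrm : r * (√13 * m + 4) = 2 := by rw [hr']; field_simp
  have hfin := alp_fin (m+1) r
  have hnon : (alp (m+1) r).Nonempty := ⟨_, cp_mem _ _ 0⟩
  have hcard := alp_card hk r
  have hlow : ∀ α : Set E2, α.Finite → α.Nonempty → α.ncard ≤ 6 * (m+1) →
      13/48 * r^2 ≤ ∫ x, DD α x ∂hexP := by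
    intro α a b c
    refine le_trans (le_of_eq ?_) (lower_s5 a b c h0 h1)
    unfold kap
    push_cast
    linear_combination (13/48 * r^2) * hrm
  have hup : ∫ x, DD (alp (m+1) r) x ∂hexP ≤ 13/48 * r^2 := by
    have hD := DD_cont hfin hnon
    rw [hex_int_s5 hD]
    have : ∀ i : Fin 6, ∫ t in (0:ℝ)..1, DD (alp (m+1) r) (side i t) ≤ 13/48 * r^2 := by
      intro i
      have hrs : 2 * r + m * (√13 / 2 * r) = 1 := by linarith
      apply upper (hD.comp (side_cont i)) (s := √13/2 * r) (m := m) h0 (by positivity) hrs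
      · rw [mul_pow, div_pow, hz]; ring
      · intro t
        rw [← cp1 i]; exact DD_le (cp_mem _ _ _)
      · intro t
        rw [← cp2 i]; exact DD_le (cp_mem _ _ _)
      · intro j hj t
        have hm0 : (m:ℝ) ≠ 0 := by
          have : 0 < m := by omega
          positivity
        have hmem := side_mem (k := m+1) (r := r) (j := j+1) (by omega) (by omega) i
        have e : r + (2 * ((j+1:ℕ) : ℝ) - 1) / (2 * (((m+1:ℕ) : ℝ) - 1)) * (1 - 2 * r) =
            r + (j + 1/2) * (√13/2 * r) := by
          rw [hm, show 1 - 2 * r = m * (√13/2 * r) by linarith]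
          push_cast
          field_simp; ring
        rw [e] at hmem
        rw [← side_dist i]
        exact DD_le hmem
    have := Finset.sum_le_sum (fun i (_ : i ∈ Finset.univ) => this i)
    simp only [Finset.sum_const, Finset.card_univ, Fintype.card_fin, nsmul_eq_mul] at this
    push_cast at this
    linarith
  have heq : ∫ x, DD (alp (m+1) r) x ∂hexP = 13/48 * r^2 :=
    le_antisymm hup (hlow _ hfin hnon hcard)
  have hq : quantErr hexP (6 * (m+1)) = 13/48 * r^2 := by
    apply IsLeast.csInf_eq
    constructor
    · exact ⟨_, hfin, hnon, hcard, heq.symm⟩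
    · rintro v ⟨α, a, b, c, rfl⟩
      exact hlow α a b c
  exact ⟨⟨hfin, hnon, hcard, heq.trans hq.symm⟩, hq.trans hV.symm⟩

end

/-- For `n = 6k`, with `r = 2(√13(k-1)-4)/(13(k-1)²-16)`, the set
`αₙ = {(r/8, √3r/8), (1-r/8, √3r/8), ((6-r)/4, √3/2), (1-r/8, -√3(r-8)/8),
(r/8, -√3(r-8)/8), ((r-2)/4, √3/2)} ∪ γ ∪ ⋃_{i=1}^5 T_i(γ)` forms an optimal
set of `n`-means for the uniform distribution on the hexagon boundary, where
`T_i` is the rotation about the center by angle `iπ/3`, and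
`Vₙ = 13(13(k-1)² - 8√13(k-1) + 16)/(12(16 - 13(k-1)²)²)`. -/
theorem stmt_5 (k : ℕ) (hk : 1 ≤ k) (r : ℝ)
    (hr : r = 2 * (Real.sqrt 13 * ((k : ℝ) - 1) - 4) / (13 * ((k : ℝ) - 1) ^ 2 - 16)) :
    IsOptimalSet hexP (6 * k)
      (({pt (r/8) (Real.sqrt 3 * r / 8), pt (1 - r/8) (Real.sqrt 3 * r / 8),
          pt ((6 - r)/4) (Real.sqrt 3 / 2), pt (1 - r/8) (-(Real.sqrt 3 * (r - 8)) / 8),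
          pt (r/8) (-(Real.sqrt 3 * (r - 8)) / 8), pt ((r - 2)/4) (Real.sqrt 3 / 2)} : Set E2)
        ∪ gam k r ∪ ⋃ i ∈ Finset.Icc (1 : ℕ) 5, rotHex ((i : ℝ) * Real.pi / 3) '' gam k r) ∧
    quantErr hexP (6 * k) =
      13 * (13 * ((k : ℝ) - 1) ^ 2 - 8 * Real.sqrt 13 * ((k : ℝ) - 1) + 16) /
        (12 * (16 - 13 * ((k : ℝ) - 1) ^ 2) ^ 2) := by
  exact main_aux k hk r hr
end
end

section
/- For the uniform probability distribution P on the boundary L of the regular hexagon with vertices (0,0), (1,0), (3/2,√3/2), (1,√3), (0,√3), (−1/2,√3/2), the set {(15/16, √3/16), (11/8, √3/2), (15/16, 15√3/16), (1/16, 15√3/16), (−3/8, √3/2), (1/16, √3/16)} forms an optimal set of six-means, and the quantization error for six-means is V₆(P) = 13/192. -/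
open MeasureTheory Real Filter
open scoped ENNReal

noncomputable section

lemma quad_int (n x p q : ℝ) : ∫ t in p..q, (13/64 - (t^2 - 2*t*x + n)) =
    (13/64 - n)*(q-p) - (q^3-p^3)/3 + x*(q^2-p^2) := by
  have : ∀ t : ℝ, (13/64 - (t^2 - 2*t*x + n)) = (13/64 - n) - t^2 + (2*x)*t := by intro t; ring
  simp only [this]
  rw [intervalIntegral.integral_add (by apply Continuous.intervalIntegrable; fun_prop) (by apply Continuous.intervalIntegrable; fun_prop), intervalIntegral.integral_sub (by apply Continuous.intervalIntegrable; fun_prop) (by apply Continuous.intervalIntegrable; fun_prop)]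
  rw [intervalIntegral.integral_const_mul]
  simp [integral_pow, integral_id]
  ring

lemma pos_part (n x : ℝ) : ∃ p l : ℝ, 0 ≤ p ∧ 0 ≤ l ∧
    ∫ t in (0:ℝ)..1, max 0 (13/64 - (t^2 - 2*t*x + n)) =
    (13/64 - n)*l - ((p+l)^3-p^3)/3 + x*((p+l)^2-p^2) := by
  have hc : Continuous (fun t : ℝ => max 0 (13/64 - (t^2 - 2*t*x + n))) := by fun_prop
  have key : ∃ p q : ℝ, 0 ≤ p ∧ p ≤ q ∧ q ≤ 1 ∧ (∀ t, 0 ≤ t → t < p → 13/64 - (t^2 - 2*t*x + n) ≤ 0) ∧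
     (∀ t, q < t → t ≤ 1 → 13/64 - (t^2 - 2*t*x + n) ≤ 0) ∧
     (∀ t, p < t → t < q → 0 ≤ 13/64 - (t^2 - 2*t*x + n)) := by
    have e : ∀ t, 13/64 - (t^2 - 2*t*x + n) = (13/64 - n + x^2) - (t-x)^2 := by intro t; ring
    simp only [e]
    rcases le_total (13/64 - n + x^2) 0 with h | h
    · refine ⟨0, 0, le_rfl, le_rfl, zero_le_one, ?_, ?_, ?_⟩
      · intro t _ _; nlinarith [sq_nonneg (t-x)]
      · intro t _ _; nlinarith [sq_nonneg (t-x)]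
      · intro t h1 h2; linarith
    · obtain ⟨d, hd, hd2⟩ : ∃ d : ℝ, 0 ≤ d ∧ d^2 = 13/64 - n + x^2 := ⟨_, Real.sqrt_nonneg _, Real.sq_sqrt h⟩
      rw [← hd2]
      refine ⟨max 0 (min 1 (x-d)), max 0 (min 1 (x+d)), le_max_left _ _, ?_, ?_, ?_, ?_, ?_⟩
      · gcongr; linarith
      · simp
      · intro t h0 ht
        rcases lt_max_iff.1 ht with h' | h'
        · linarith
        · have := (lt_min_iff.1 h').2
          nlinarith
      · intro t h0 ht
        have h' := (max_lt_iff.1 h0).2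
        rcases min_lt_iff.1 h' with h'' | h''
        · linarith
        · nlinarith
      · intro t h0 ht
        obtain ⟨h1, h2⟩ := max_lt_iff.1 h0
        rcases lt_max_iff.1 ht with h3 | h3
        · linarith
        · obtain ⟨h4, h5⟩ := lt_min_iff.1 h3
          rcases min_lt_iff.1 h2 with h6 | h6
          · linarith
          · nlinarith
  obtain ⟨p, q, h0, hpq, hq, h1, h2, h3⟩ := key
  refine ⟨p, q - p, h0, by linarith, ?_⟩
  rw [← intervalIntegral.integral_add_adjacent_intervals (hc.intervalIntegrable 0 p) (hc.intervalIntegrable p 1),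
    ← intervalIntegral.integral_add_adjacent_intervals (hc.intervalIntegrable p q) (hc.intervalIntegrable q 1)]
  have i1 : ∫ t in (0:ℝ)..p, max 0 (13/64 - (t^2 - 2*t*x + n)) = 0 := by
    rw [intervalIntegral.integral_congr_ae (g := fun _ => 0)]
    · simp
    · have : ∀ᵐ t : ℝ, t ≠ p := by simp [ae_iff]
      filter_upwards [this] with t htq ht
      rw [Set.uIoc_of_le h0] at ht
      exact max_eq_left (h1 t ht.1.le (lt_of_le_of_ne ht.2 htq))
  have i3 : ∫ t in q..1, max 0 (13/64 - (t^2 - 2*t*x + n)) = 0 := by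
    rw [intervalIntegral.integral_congr_ae (g := fun _ => 0)]
    · simp
    · refine Eventually.of_forall fun t ht => ?_
      rw [Set.uIoc_of_le hq] at ht
      exact max_eq_left (h2 t ht.1 ht.2)
  have i2 : ∫ t in p..q, max 0 (13/64 - (t^2 - 2*t*x + n)) = ∫ t in p..q, (13/64 - (t^2 - 2*t*x + n)) := by
    apply intervalIntegral.integral_congr_ae
    have : ∀ᵐ t : ℝ, t ≠ q := by simp [ae_iff]
    filter_upwards [this] with t htq ht
    rw [Set.uIoc_of_le hpq] at ht
    exact max_eq_right (h3 t ht.1 (lt_of_le_of_ne ht.2 htq))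
  rw [i1, i2, i3, quad_int]
  ring

lemma corner (n x y : ℝ) (h : 4/3*(x^2+x*y+y^2) ≤ n) :
    (∫ t in (0:ℝ)..1, max 0 (13/64 - (t^2 - 2*t*x + n))) +
    (∫ t in (0:ℝ)..1, max 0 (13/64 - (t^2 - 2*t*y + n))) ≤ 13/96 := by
  obtain ⟨p, l, hp, hl, e1⟩ := pos_part n x
  obtain ⟨q, k, hq, hk, e2⟩ := pos_part n y
  rw [e1, e2]
  rcases eq_or_lt_of_le (add_nonneg hl hk) with hs | hs
  · have : l = 0 := by linarith
    have : k = 0 := by linarith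
    subst_vars; norm_num
  -- midpoints
  obtain ⟨m, hm⟩ : ∃ m, m = p + l/2 := ⟨_, rfl⟩
  obtain ⟨w, hw⟩ : ∃ w, w = q + k/2 := ⟨_, rfl⟩
  have hpm : p = m - l/2 := by linarith
  have hqw : q = w - k/2 := by linarith
  have hm1 : l/2 ≤ m := by linarith
  have hw1 : k/2 ≤ w := by linarith
  subst hpm hqw
  obtain ⟨s, hsd⟩ : ∃ s, s = l + k := ⟨_, rfl⟩
  have hsq : 0 ≤ s^2*n - 2*s*(l*m*x+k*w*y) + (l*m)^2+(k*w)^2 - l*m*(k*w) := by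
    have h4 := mul_le_mul_of_nonneg_left h (sq_nonneg s)
    nlinarith [sq_nonneg (s*x - (l*m - k*w/2) + (s*y - (k*w-l*m/2))), sq_nonneg (s*x - (l*m - k*w/2)), sq_nonneg (s*y - (k*w-l*m/2))]
  have hmw : l^2/4+k^2/4+l*k/4 ≤ m^2+w^2+m*w := by
    have := mul_self_le_mul_self (by positivity) hm1
    have := mul_self_le_mul_self (by positivity) hw1
    have := mul_le_mul hm1 hw1 (by positivity) (by linarith)
    nlinarith
  have hlk := mul_le_mul_of_nonneg_left hmw (mul_nonneg hl hk)
  have ht : l*k ≤ s^2/4 := by rw [hsd]; nlinarith [sq_nonneg (l-k)]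
  have ht2 : (l*k)^2 ≤ s^4/16 := by nlinarith [mul_nonneg hl hk]
  have hcub : 0 ≤ (s-1)^2*(s+2) := mul_nonneg (sq_nonneg _) (by linarith)
  have hspos : 0 < s := by linarith
  have hcub2 := mul_nonneg hspos.le hcub
  refine le_of_mul_le_mul_left ?_ hspos
  have E : s*((13/64 - n)*l - ((m - l/2+l)^3-(m - l/2)^3)/3 + x*((m - l/2+l)^2-(m - l/2)^2) + ((13/64 - n)*k - ((w - k/2+k)^3-(w - k/2)^3)/3 + y*((w - k/2+k)^2-(w - k/2)^2)))
    = s^2*(13/64) - (s^2*n - 2*s*(l*m*x+k*w*y) + (l*m)^2+(k*w)^2 - l*m*(k*w)) - l*k*(m^2+w^2+m*w) - s*(l^3+k^3)/12 := by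
    subst hsd; ring
  have E2 : s*(l^3+k^3)/12 + l*k*(l^2/4+k^2/4+l*k/4) = s^4/12 - (l*k)^2/4 := by subst hsd; ring
  rw [E]
  linarith

def hX : Fin 6 → ℝ := ![0, 1, 3/2, 1, 0, -1/2]
def hY : Fin 6 → ℝ := ![0, 0, 1/2, 1, 1, 1/2]
def hDX : Fin 6 → ℝ := ![1, 1/2, -1/2, -1, -1/2, 1/2]
def hDY : Fin 6 → ℝ := ![0, 1/2, 1/2, 0, -1/2, -1/2]
def hCX : Fin 6 → ℝ := ![1/16, 15/16, 11/8, 15/16, 1/16, -3/8]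
def hCY : Fin 6 → ℝ := ![1/16, 1/16, 1/2, 15/16, 15/16, 1/2]

/-- squared distance in the rescaled coordinates -/
def hS (i : Fin 6) (t a b : ℝ) : ℝ := (hX i + t * hDX i - a)^2 + 3*(hY i + t * hDY i - b)^2

def hG (i : Fin 6) (t : ℝ) : E2 := pt (hX i + t * hDX i) (√3 * (hY i + t * hDY i))

lemma hX_succ (i : Fin 6) : hX (i+1) = hX i + hDX i := by
  fin_cases i <;> norm_num [hX, hDX, Fin.add_def]
lemma hY_succ (i : Fin 6) : hY (i+1) = hY i + hDY i := by
  fin_cases i <;> norm_num [hY, hDY, Fin.add_def]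
lemma hDX_succ (i : Fin 6) : hDX (i+1) = hDX i / 2 - 3/2 * hDY i := by
  fin_cases i <;> norm_num [hDX, hDY, Fin.add_def]
lemma hDY_succ (i : Fin 6) : hDY (i+1) = hDX i / 2 + hDY i / 2 := by
  fin_cases i <;> norm_num [hDX, hDY, Fin.add_def]
lemma hD_unit (i : Fin 6) : hDX i ^2 + 3 * hDY i ^ 2 = 1 := by
  fin_cases i <;> norm_num [hDX, hDY]
lemma hC_eq (i : Fin 6) (t : ℝ) : hS i t (hCX i) (hCY i) = t^2 - t/8 + 1/64 := by
  fin_cases i <;> simp [hS, hX, hY, hDX, hDY, hCX, hCY] <;> ring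
lemma hC_eq2 (i : Fin 6) (t : ℝ) : hS i t (hCX (i+1)) (hCY (i+1)) = (1-t)^2 - (1-t)/8 + 1/64 := by
  fin_cases i <;> simp [hS, hX, hY, hDX, hDY, hCX, hCY, Fin.add_def] <;> ring

lemma norm_sq_pt (a b c d : ℝ) : ‖pt a (√3 * b) - pt c (√3 * d)‖^2 = (a-c)^2 + 3*(b-d)^2 := by
  rw [EuclideanSpace.norm_sq_eq]
  have h3 : (√3:ℝ)^2 = 3 := Real.sq_sqrt (by norm_num)
  simp [pt, Fin.sum_univ_two]
  linear_combination (b-d)^2 * h3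

lemma hG_dist (i : Fin 6) (t a b : ℝ) : ‖hG i t - pt a (√3*b)‖^2 = hS i t a b := by
  rw [hG, norm_sq_pt, hS]

lemma exists_pt (x : E2) : ∃ a b : ℝ, x = pt a (√3 * b) := by
  refine ⟨x 0, x 1 / √3, ?_⟩
  have : (√3:ℝ) ≠ 0 := by positivity
  ext i; fin_cases i <;> simp [pt]
  field_simp

lemma hG_isom (i : Fin 6) : Isometry (hG i) := by
  refine Isometry.of_dist_eq fun t r => ?_
  rw [dist_eq_norm, Real.dist_eq, ← sq_eq_sq₀ (norm_nonneg _) (abs_nonneg _), sq_abs]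
  have := hG_dist i t (hX i + r * hDX i) (hY i + r * hDY i)
  rw [← hG] at this
  rw [this, hS]
  linear_combination (t-r)^2 * hD_unit i

/-- squared distance between points on edges -/
def hE (i j : Fin 6) (t r : ℝ) : ℝ := hS i t (hX j + r * hDX j) (hY j + r * hDY j)

lemma hE_adj (i : Fin 6) (t r : ℝ) : hE i (i+1) t r = (1-t)^2 + r^2 + (1-t)*r := by
  rw [hE, hS, hX_succ, hY_succ, hDX_succ, hDY_succ]
  linear_combination ((1-t)^2 + r^2 + (1-t)*r) * hD_unit i

lemma hE_adj2 (i : Fin 6) (t r : ℝ) : hE i (i+1+1) t r = (1-t)^2 + r^2 + 1 + (1-t) + r - (1-t)*r := by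
  rw [hE, hS]
  simp only [hX_succ, hY_succ, hDX_succ, hDY_succ]
  linear_combination ((1-t)^2 + r^2 + 1 + (1-t) + r - (1-t)*r) * hD_unit i

lemma hE_adj3 (i : Fin 6) (t r : ℝ) : hE i (i+1+1+1) t r = (1-t-r)^2 + 3 := by
  rw [hE, hS]
  simp only [hX_succ, hY_succ, hDX_succ, hDY_succ]
  linear_combination ((1-t-r)^2 + 3) * hD_unit i

lemma hE_symm (i j : Fin 6) (t r : ℝ) : hE i j t r = hE j i r t := by
  simp only [hE, hS]; ring

lemma hE_nonadj (i j : Fin 6) (h0 : j ≠ i) (h1 : j ≠ i+1) (h2 : i ≠ j + 1) (t r : ℝ)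
    (ht : t ∈ Set.Icc (0:ℝ) 1) (hr : r ∈ Set.Icc (0:ℝ) 1) : 1 ≤ hE i j t r := by
  have : j = i+1+1 ∨ i = j+1+1 ∨ j = i+1+1+1 := by revert i j; decide
  obtain ⟨t0, t1⟩ := ht
  obtain ⟨r0, r1⟩ := hr
  rcases this with rfl | rfl | rfl
  · rw [hE_adj2]; nlinarith
  · rw [hE_symm, hE_adj2]; nlinarith
  · rw [hE_adj3]; nlinarith

lemma hG_inj (i j : Fin 6) (h0 : i ≠ j) (t r : ℝ)
    (ht : t ∈ Set.Icc (0:ℝ) 1) (hr : r ∈ Set.Icc (0:ℝ) 1) (h : hG i t = hG j r) : t = 0 ∨ t = 1 := by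
  have hz : hE i j t r = 0 := by
    rw [hE, ← hG_dist, h, ← hG, sub_self]; simp
  by_cases h1 : j = i + 1
  · subst h1
    rw [hE_adj] at hz
    right; nlinarith [ht.1, ht.2, hr.1, hr.2, sq_nonneg (1-t), mul_nonneg (sub_nonneg.2 ht.2) hr.1]
  by_cases h2 : i = j + 1
  · subst h2
    rw [hE_symm, hE_adj] at hz
    left; nlinarith [ht.1, ht.2, hr.1, hr.2, sq_nonneg (1-r), mul_nonneg (sub_nonneg.2 hr.2) ht.1]
  have := hE_nonadj i j h0.symm h1 h2 t r ht hr
  linarith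

lemma hexL_eq_s6 : hexL = ⋃ i : Fin 6, hG i '' Set.Icc 0 1 := by
  have key : ∀ i : Fin 6, hG i '' Set.Icc 0 1 = segment ℝ (hG i 0) (hG i 1) := by
    intro i
    rw [segment_eq_image']
    congr 1
    ext t k
    fin_cases k <;> simp [hG, pt]
    ring
  have v0 : hG 0 0 = pt 0 0 := by simp [hG, hX, hY]
  have v : ∀ i, hG i 1 = hG (i+1) 0 := by intro i; simp [hG, hX_succ, hY_succ]
  have v1 : hG 1 0 = pt 1 0 := by simp [hG, hX, hY]
  have v2 : hG 2 0 = pt (3/2) (√3/2) := by simp [hG, hX, hY, div_eq_mul_inv]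
  have v3 : hG 3 0 = pt 1 (√3) := by simp [hG, hX, hY]
  have v4 : hG 4 0 = pt 0 (√3) := by simp [hG, hX, hY]
  have v5 : hG 5 0 = pt (-(1/2)) (√3/2) := by simp [hG, hX, hY, div_eq_mul_inv]
  rw [hexL, ← v0, ← v1, ← v2, ← v3, ← v4, ← v5]
  ext x
  simp only [key, Set.mem_iUnion, Set.mem_union]
  constructor
  · rintro (((((h | h) | h) | h) | h) | h)
    · exact ⟨0, by rwa [v]⟩
    · exact ⟨1, by rwa [v]⟩
    · exact ⟨2, by rwa [v]⟩
    · exact ⟨3, by rwa [v]⟩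
    · exact ⟨4, by rwa [v]⟩
    · exact ⟨5, by rwa [v]⟩
  · rintro ⟨i, h⟩
    rw [v] at h
    fin_cases i
    · exact Or.inl (Or.inl (Or.inl (Or.inl (Or.inl h))))
    · exact Or.inl (Or.inl (Or.inl (Or.inl (Or.inr h))))
    · exact Or.inl (Or.inl (Or.inl (Or.inr h)))
    · exact Or.inl (Or.inl (Or.inr h))
    · exact Or.inl (Or.inr h)
    · exact Or.inr h

lemma hexP_eq : hexP = (6 : ℝ≥0∞)⁻¹ • ∑ i : Fin 6, Measure.map (hG i) (volume.restrict (Set.Icc (0:ℝ) 1)) := by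
  rw [hexP, hexL_eq_s6, Measure.restrict_iUnion_ae, Measure.sum_fintype]
  · congr 1
    refine Finset.sum_congr rfl fun i _ => ?_
    have hme : MeasurableEmbedding (hG i) := (hG_isom i).isClosedEmbedding.measurableEmbedding
    have := (hG_isom i).map_hausdorffMeasure (d := 1) (Or.inl zero_le_one)
    rw [hausdorffMeasure_real] at this
    have h2 := hme.restrict_map volume (hG i '' Set.Icc 0 1)
    rw [Set.preimage_image_eq _ hme.injective] at h2
    rw [← h2, this, Measure.restrict_restrict_of_subset (Set.image_subset_range _ _)]
  · intro i j hij
    have : NullSingletonClass (μH[1] : Measure E2) := Measure.nullSingletonClass_hausdorff E2 zero_lt_one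
    refine measure_mono_null (t := {hG i 0, hG i 1}) ?_ ((Set.toFinite _).measure_zero _)
    rintro x ⟨⟨t, ht, rfl⟩, ⟨r, hr, hx⟩⟩
    rcases hG_inj i j hij t r ht hr hx.symm with rfl | rfl <;> simp
  · intro i
    exact (isCompact_Icc.image (hG_isom i).continuous).measurableSet.nullMeasurableSet

lemma integral_hexP (f : E2 → ℝ) (hf : Continuous f) :
    ∫ x, f x ∂hexP = 1/6 * ∑ i : Fin 6, ∫ t in (0:ℝ)..1, f (hG i t) := by
  rw [hexP_eq, integral_smul_measure, integral_finsetSum_measure]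
  · simp only [ENNReal.toReal_inv, ENNReal.toReal_ofNat, smul_eq_mul, one_div]
    congr 1
    refine Finset.sum_congr rfl fun i _ => ?_
    rw [integral_map (hG_isom i).continuous.aemeasurable hf.aestronglyMeasurable,
      intervalIntegral.integral_of_le zero_le_one, integral_Icc_eq_integral_Ioc]
  · intro i _
    rw [integrable_map_measure hf.aestronglyMeasurable (hG_isom i).continuous.aemeasurable]
    exact (hf.comp (hG_isom i).continuous).continuousOn.integrableOn_compact isCompact_Icc

lemma sInf_cont (α : Set E2) (hα : α.Finite) (hne : α.Nonempty) :
    Continuous (fun x : E2 => sInf ((fun a => ‖x - a‖ ^ 2) '' α)) := by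
  have hne' : hα.toFinset.Nonempty := by simpa using hne
  have : (fun x : E2 => sInf ((fun a => ‖x - a‖ ^ 2) '' α)) =
      fun x => hα.toFinset.inf' hne' (fun a => ‖x - a‖ ^ 2) := by
    ext x; rw [Finset.inf'_eq_csInf_image]; simp
  rw [this]
  exact Continuous.finset_inf'_apply hne' (fun a _ => by fun_prop)

def hF (i : Fin 6) (a b : ℝ) : ℝ := ∫ t in (0:ℝ)..1, max 0 (13/64 - hS i t a b)

lemma hF_nonneg (i : Fin 6) (a b : ℝ) : 0 ≤ hF i a b :=
  intervalIntegral.integral_nonneg zero_le_one fun _ _ => le_max_left _ _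

lemma hF_adj (i : Fin 6) (a b : ℝ) : hF (i+1) a b + hF i a b ≤ 13/96 := by
  have h := corner ((hX (i+1) - a)^2 + 3*(hY (i+1) - b)^2)
    (hDX (i+1) * (a - hX (i+1)) + 3 * hDY (i+1) * (b - hY (i+1)))
    (-(hDX i * (a - hX (i+1)) + 3 * hDY i * (b - hY (i+1)))) ?_
  · convert h using 2
    · rw [hF]; congr 1; ext t; congr 2
      rw [hS]; linear_combination t^2 * hD_unit (i+1)
    · have e := intervalIntegral.integral_comp_sub_left (a := 0) (b := 1) (fun t => max 0 (13/64 - hS i t a b)) 1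
      norm_num at e
      rw [hF, ← e]; congr 1; ext t; congr 2
      rw [hS, hX_succ, hY_succ]; linear_combination t^2 * hD_unit (i)
  · apply le_of_eq
    rw [hDX_succ, hDY_succ]
    linear_combination ((hX (i+1) - a)^2 + 3*(hY (i+1) - b)^2) * hD_unit i

lemma hF_nonadj (i j : Fin 6) (h0 : j ≠ i) (h1 : j ≠ i+1) (h2 : i ≠ j + 1) (a b : ℝ) :
    hF i a b = 0 ∨ hF j a b = 0 := by
  by_contra! hcon
  have key : ∀ k, hF k a b ≠ 0 → ∃ t ∈ Set.Icc (0:ℝ) 1, hS k t a b < 13/64 := by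
    intro k hk
    by_contra! hh
    apply hk
    rw [hF, intervalIntegral.integral_congr (g := fun _ => 0)]
    · simp
    · intro t ht
      rw [Set.uIcc_of_le zero_le_one] at ht
      exact max_eq_left (by linarith [hh t ht])
  obtain ⟨t, ht, h3⟩ := key i hcon.1
  obtain ⟨r, hr, h4⟩ := key j hcon.2
  have h5 := hE_nonadj i j h0 h1 h2 t r ht hr
  rw [hE] at h5
  simp only [hS] at h3 h4 h5
  nlinarith [sq_nonneg (hX i + t * hDX i - a + (hX j + r * hDX j - a)), sq_nonneg (hY i + t * hDY i - b + (hY j + r * hDY j - b))]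

lemma hF_sum (a b : ℝ) : ∑ i, hF i a b ≤ 13/96 := by
  have n := fun i => hF_nonneg i a b
  have d := fun i j h0 h1 h2 => hF_nonadj i j h0 h1 h2 a b
  have d02 := d 0 2 (by decide) (by decide) (by decide)
  have d03 := d 0 3 (by decide) (by decide) (by decide)
  have d04 := d 0 4 (by decide) (by decide) (by decide)
  have d13 := d 1 3 (by decide) (by decide) (by decide)
  have d14 := d 1 4 (by decide) (by decide) (by decide)
  have d15 := d 1 5 (by decide) (by decide) (by decide)
  have d24 := d 2 4 (by decide) (by decide) (by decide)
  have d25 := d 2 5 (by decide) (by decide) (by decide)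
  have d35 := d 3 5 (by decide) (by decide) (by decide)
  have a0 : hF 1 a b + hF 0 a b ≤ 13/96 := hF_adj 0 a b
  have a1 : hF 2 a b + hF 1 a b ≤ 13/96 := hF_adj 1 a b
  have a2 : hF 3 a b + hF 2 a b ≤ 13/96 := hF_adj 2 a b
  have a3 : hF 4 a b + hF 3 a b ≤ 13/96 := hF_adj 3 a b
  have a4 : hF 5 a b + hF 4 a b ≤ 13/96 := hF_adj 4 a b
  have a5 : hF 0 a b + hF 5 a b ≤ 13/96 := hF_adj 5 a b
  have n0 := n 0
  have n1 := n 1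
  have n2 := n 2
  have n3 := n 3
  have n4 := n 4
  have n5 := n 5
  rw [Fin.sum_univ_six]
  clear n d
  generalize hF 0 a b = f0 at *
  generalize hF 1 a b = f1 at *
  generalize hF 2 a b = f2 at *
  generalize hF 3 a b = f3 at *
  generalize hF 4 a b = f4 at *
  generalize hF 5 a b = f5 at *
  grind

lemma lower_s6 (α : Set E2) (hα : α.Finite) (hne : α.Nonempty) (hc : α.ncard ≤ 6) :
    13/192 ≤ ∫ x, sInf ((fun a => ‖x - a‖ ^ 2) '' α) ∂hexP := by
  rw [integral_hexP _ (sInf_cont α hα hne)]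
  have hpt : ∀ x : E2, 13/64 - ∑ a ∈ hα.toFinset, max 0 (13/64 - ‖x - a‖^2) ≤
      sInf ((fun a => ‖x - a‖ ^ 2) '' α) := by
    intro x
    refine le_csInf (hne.image _) ?_
    rintro _ ⟨a, ha, rfl⟩
    have := Finset.single_le_sum (f := fun a => max 0 (13/64 - ‖x - a‖^2)) (fun a _ => le_max_left _ _) (hα.mem_toFinset.2 ha)
    have := le_max_right 0 (13/64 - ‖x - a‖^2)
    dsimp only at *
    linarith
  have hGc : ∀ i, Continuous (hG i) := fun i => (hG_isom i).continuous
  have h1 : ∀ i, 13/64 - ∑ a ∈ hα.toFinset, ∫ t in (0:ℝ)..1, max 0 (13/64 - ‖hG i t - a‖^2) ≤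
     ∫ t in (0:ℝ)..1, sInf ((fun a => ‖hG i t - a‖ ^ 2) '' α) := by
    intro i
    have hgc := hGc i
    rw [← intervalIntegral.integral_finsetSum (fun a _ => by apply Continuous.intervalIntegrable; fun_prop)]
    have : (13/64 : ℝ) = ∫ t in (0:ℝ)..1, (13/64:ℝ) := by simp
    conv_lhs => enter [1]; rw [this]
    rw [← intervalIntegral.integral_sub (by simp) (by apply Continuous.intervalIntegrable; fun_prop)]
    refine intervalIntegral.integral_mono_on zero_le_one (by apply Continuous.intervalIntegrable; fun_prop) ?_ (fun t _ => hpt _)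
    exact ((sInf_cont α hα hne).comp hgc).intervalIntegrable _ _
  have h2 := Finset.sum_le_sum (fun i (_ : i ∈ (Finset.univ : Finset (Fin 6))) => h1 i)
  rw [Finset.sum_sub_distrib, Finset.sum_comm] at h2
  have h3 : ∑ a ∈ hα.toFinset, ∑ i, ∫ t in (0:ℝ)..1, max 0 (13/64 - ‖hG i t - a‖^2) ≤ ∑ a ∈ hα.toFinset, 13/96 := by
    refine Finset.sum_le_sum fun x _ => ?_
    obtain ⟨a, b, rfl⟩ := exists_pt x
    simp only [hG_dist]
    exact hF_sum a b
  rw [Set.ncard_eq_toFinset_card _ hα] at hc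
  have hc' : (hα.toFinset.card : ℝ) ≤ 6 := by exact_mod_cast hc
  simp at h2 h3
  linarith

def hA : Set E2 := {pt (15/16) (Real.sqrt 3 / 16), pt (11/8) (Real.sqrt 3 / 2),
        pt (15/16) (15 * Real.sqrt 3 / 16), pt (1/16) (15 * Real.sqrt 3 / 16),
        pt (-(3/8)) (Real.sqrt 3 / 2), pt (1/16) (Real.sqrt 3 / 16)}

lemma hC_mem (i : Fin 6) : pt (hCX i) (√3 * hCY i) ∈ hA := by
  have e1 : √3 * (1/16) = √3/16 := by ring
  have e2 : √3 * (1/2) = √3/2 := by ring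
  have e3 : √3 * (15/16) = 15*√3/16 := by ring
  have e4 : (-3/8 : ℝ) = -(3/8) := by ring
  fin_cases i <;> simp [hCX, hCY, hA, -one_div, e1, e2, e3, e4]

lemma hA_fin : hA.Finite := by unfold hA; exact Set.toFinite _

lemma hA_card : hA.ncard ≤ 6 := by
  unfold hA
  refine (Set.ncard_insert_le _ _).trans (Nat.succ_le_succ ?_)
  refine (Set.ncard_insert_le _ _).trans (Nat.succ_le_succ ?_)
  refine (Set.ncard_insert_le _ _).trans (Nat.succ_le_succ ?_)
  refine (Set.ncard_insert_le _ _).trans (Nat.succ_le_succ ?_)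
  refine (Set.ncard_insert_le _ _).trans (Nat.succ_le_succ ?_)
  simp

lemma upper_s6 : ∫ x, sInf ((fun a => ‖x - a‖ ^ 2) '' hA) ∂hexP ≤ 13/192 := by
  have hne : hA.Nonempty := ⟨_, hC_mem 0⟩
  have hcont := sInf_cont hA hA_fin hne
  rw [integral_hexP _ hcont]
  have hle : ∀ i t k, sInf ((fun a => ‖hG i t - a‖ ^ 2) '' hA) ≤ hS i t (hCX k) (hCY k) := by
    intro i t k
    rw [← hG_dist]
    refine csInf_le ⟨0, ?_⟩ ⟨_, hC_mem k, rfl⟩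
    rintro _ ⟨a, _, rfl⟩
    positivity
  have key : ∀ i, ∫ t in (0:ℝ)..1, sInf ((fun a => ‖hG i t - a‖ ^ 2) '' hA) ≤ 13/192 := by
    intro i
    have hc := hcont.comp (hG_isom i).continuous
    have hc1 : ∀ p q, IntervalIntegrable (fun t => sInf ((fun a => ‖hG i t - a‖ ^ 2) '' hA)) volume p q :=
      fun p q => hc.intervalIntegrable p q
    rw [← intervalIntegral.integral_add_adjacent_intervals (hc1 0 (1/2)) (hc1 (1/2) 1)]
    have hq : ∀ p q, ∫ t in p..q, (t^2 - t/8 + 1/64 : ℝ) = (q^3-p^3)/3 - (q^2-p^2)/16 + (q-p)/64 := by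
      intro p q
      rw [intervalIntegral.integral_add (by apply Continuous.intervalIntegrable; fun_prop) (by apply Continuous.intervalIntegrable; fun_prop), intervalIntegral.integral_sub (by apply Continuous.intervalIntegrable; fun_prop) (by apply Continuous.intervalIntegrable; fun_prop)]
      simp [integral_pow, integral_id]
      ring
    have h1 : ∫ t in (0:ℝ)..(1/2), sInf ((fun a => ‖hG i t - a‖ ^ 2) '' hA) ≤ ∫ t in (0:ℝ)..(1/2), (t^2 - t/8 + 1/64 : ℝ) := by
      refine intervalIntegral.integral_mono_on (by norm_num) (hc1 _ _) (by apply Continuous.intervalIntegrable; fun_prop) fun t _ => ?_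
      rw [← hC_eq i]; exact hle _ _ _
    have h2 : ∫ t in (1/2:ℝ)..1, sInf ((fun a => ‖hG i t - a‖ ^ 2) '' hA) ≤ ∫ t in (1/2:ℝ)..1, ((1-t)^2 - (1-t)/8 + 1/64 : ℝ) := by
      refine intervalIntegral.integral_mono_on (by norm_num) (hc1 _ _) (by apply Continuous.intervalIntegrable; fun_prop) fun t _ => ?_
      rw [← hC_eq2 i]; exact hle _ _ _
    rw [intervalIntegral.integral_comp_sub_left (fun t => (t^2 - t/8 + 1/64 : ℝ)) 1, hq] at h2
    rw [hq] at h1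
    norm_num at h1 h2 ⊢
    linarith
  have := Finset.sum_le_sum (fun i (_ : i ∈ (Finset.univ : Finset (Fin 6))) => key i)
  simp at this
  linarith

/-- The set `{(15/16, √3/16), (11/8, √3/2), (15/16, 15√3/16), (1/16, 15√3/16),
(-3/8, √3/2), (1/16, √3/16)}` forms an optimal set of six-means for the uniform
distribution on the hexagon boundary, and `V₆ = 13/192`. -/
theorem stmt_6 :
    IsOptimalSet hexP 6
      {pt (15/16) (Real.sqrt 3 / 16), pt (11/8) (Real.sqrt 3 / 2),
        pt (15/16) (15 * Real.sqrt 3 / 16), pt (1/16) (15 * Real.sqrt 3 / 16),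
        pt (-(3/8)) (Real.sqrt 3 / 2), pt (1/16) (Real.sqrt 3 / 16)} ∧
    quantErr hexP 6 = 13 / 192 := by
  change IsOptimalSet hexP 6 hA ∧ _
  have hne : hA.Nonempty := ⟨_, hC_mem 0⟩
  have hI : ∫ x, sInf ((fun a => ‖x - a‖ ^ 2) '' hA) ∂hexP = 13/192 :=
    le_antisymm upper_s6 (lower_s6 hA hA_fin hne hA_card)
  have hV : quantErr hexP 6 = 13/192 := by
    refine IsLeast.csInf_eq ⟨⟨hA, hA_fin, hne, hA_card, hI.symm⟩, ?_⟩
    rintro _ ⟨α, h1, h2, h3, rfl⟩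
    exact lower_s6 α h1 h2 h3
  exact ⟨⟨hA_fin, hne, hA_card, hI.trans hV.symm⟩, hV⟩
end
end
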